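/- For $\alpha,\beta\in\mathbb R$ let $w_{\alpha,\beta}(x):=(1+x)^\alpha(1-x)^\beta$ and $\varphi(x):=(1-x^2)^{1/2}$ on $[-1,1]$; write $1/p:=0$ if $p=\infty$, and let $J_p:=(-1/p,\infty)$ for $p<\infty$, $J_\infty:=[0,\infty)$. Let $B_p^{\alpha,\beta}$ be the set of measurable $f:[-1,1]\to\mathbb R$ with $\|w_{\alpha,\beta}f\|_{L^p[-1,1]}=1$, and let $M^k$ be the set of $k$-monotone functions on $(-1,1)$, i.e. those whose divided differences $[x_0,\dots,x_k;f]$ are nonnegative for all distinct $x_0,\dots,x_k\in(-1,1)$. Let $\Delta_h^k(f,x):=\sum_{i=0}^k\binom ki(-1)^{k-i}f(x-kh/2+ih)$ if $x\pm kh/2\in[-1,1]$ and $\Delta_h^k(f,x):=0$ otherwise, and let $$\omega_\varphi^k(f,\delta)_{w,q}:=\sup_{0<h\le\delta}\|w\,\Delta_{h\varphi(\cdot)}^k(f,\cdot)\|_{L^q[-1+2k^2h^2,\,1-2k^2h^2]}+\sup_{0<h\le2k^2\delta^2}\|w\,\Delta_h^k(f,\cdot+kh/2)\|_{L^q[-1,\,-1+2k^2\delta^2]}+\sup_{0<h\le2k^2\delta^2}\|w\,\Delta_h^k(f,\cdot-kh/2)\|_{L^q[1-2k^2\delta^2,\,1]}$$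 be the weighted Ditzian–Totik modulus of smoothness (norms over empty intervals are $0$). Let $k\ge2$ be an integer, let $1\le q<p\le\infty$ with $(k,q,p)\ne(2,1,\infty)$, let $\alpha,\beta\in J_p$, and let $\delta_0>0$ satisfy $k^2(k+1)\delta_0^2<1$ (for $k=2$ one may take $\delta_0=1/4$). Then there exist constants $c_1,c_2>0$, depending only on $k,q,p,\alpha,\beta,\delta_0$, such that for all $0<\delta\le\delta_0$ $$c_1\,\delta^{2/q-2/p}\;\le\;\sup_{f\in B_p^{\alpha,\beta}\cap M^k}\omega_\varphi^k(f,\delta)_{w_{\alpha,\beta},q}\;\le\;c_2\,\delta^{2/q-2/p}.$$ -/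

import Mathlib

open MeasureTheory Set Filter
open scoped ENNReal

noncomputable section

/-- The Jacobi weight `w_{α,β}(x) = (1+x)^α (1-x)^β`. -/
def jacobi (α β : ℝ) (x : ℝ) : ℝ := (1 + x) ^ α * (1 - x) ^ β

/-- `φ(x) = √(1-x²)`. -/
def phiW (x : ℝ) : ℝ := Real.sqrt (1 - x ^ 2)

/-- The `L^p` norm of `g` on the interval `[a,b]` (essential sup when `p = ∞`). -/
def LpOn (g : ℝ → ℝ) (p : ℝ≥0∞) (a b : ℝ) : ℝ≥0∞ :=
  eLpNorm g p (volume.restrict (Icc a b))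

/-- The `k`-th symmetric difference `Δ_h^k(f,x)` relative to `[-1,1]`. -/
def symmDelta (k : ℕ) (h : ℝ) (f : ℝ → ℝ) (x : ℝ) : ℝ :=
  if (x - k * h / 2 ∈ Icc (-1 : ℝ) 1 ∧ x + k * h / 2 ∈ Icc (-1 : ℝ) 1) then
    ∑ i ∈ Finset.range (k + 1), ((k.choose i : ℝ) * (-1 : ℝ) ^ (k - i) * f (x - k * h / 2 + i * h))
  else 0

/-- Main-part weighted modulus `Ω_φ^k(f,δ)_{w,p}`. -/
def OmegaMain (k : ℕ) (f : ℝ → ℝ) (δ : ℝ) (wt : ℝ → ℝ) (p : ℝ≥0∞) : ℝ≥0∞ :=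
  ⨆ h ∈ Ioc (0 : ℝ) δ,
    LpOn (fun x => wt x * symmDelta k (h * phiW x) f x) p
      (-1 + 2 * (k : ℝ) ^ 2 * h ^ 2) (1 - 2 * (k : ℝ) ^ 2 * h ^ 2)

/-- Forward part `Ω→_φ^k(f,δ)_{w,p}`. -/
def OmegaFwd (k : ℕ) (f : ℝ → ℝ) (δ : ℝ) (wt : ℝ → ℝ) (p : ℝ≥0∞) : ℝ≥0∞ :=
  ⨆ h ∈ Ioc (0 : ℝ) (2 * (k : ℝ) ^ 2 * δ ^ 2),
    LpOn (fun x => wt x * symmDelta k h f (x + k * h / 2)) p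
      (-1) (-1 + 2 * (k : ℝ) ^ 2 * δ ^ 2)

/-- Backward part `Ω←_φ^k(f,δ)_{w,p}`. -/
def OmegaBwd (k : ℕ) (f : ℝ → ℝ) (δ : ℝ) (wt : ℝ → ℝ) (p : ℝ≥0∞) : ℝ≥0∞ :=
  ⨆ h ∈ Ioc (0 : ℝ) (2 * (k : ℝ) ^ 2 * δ ^ 2),
    LpOn (fun x => wt x * symmDelta k h f (x - k * h / 2)) p
      (1 - 2 * (k : ℝ) ^ 2 * δ ^ 2) 1

/-- Weighted Ditzian–Totik modulus `ω_φ^k(f,δ)_{w,p}`. -/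
def omegaDT (k : ℕ) (f : ℝ → ℝ) (δ : ℝ) (wt : ℝ → ℝ) (p : ℝ≥0∞) : ℝ≥0∞ :=
  OmegaMain k f δ wt p + OmegaFwd k f δ wt p + OmegaBwd k f δ wt p

/-- `f` is `k`-monotone on `(-1,1)`: all `k`-th divided differences over `k+1` distinct
points of `(-1,1)` are nonnegative. -/
def kMonotoneOn (k : ℕ) (f : ℝ → ℝ) : Prop :=
  ∀ x : Fin (k + 1) → ℝ, Function.Injective x → (∀ i, x i ∈ Ioo (-1 : ℝ) 1) →
    0 ≤ ∑ i, f (x i) / ∏ j ∈ Finset.univ.erase i, (x i - x j)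

/-- `M^k`, the class of `k`-monotone functions on `(-1,1)`. -/
def MSet (k : ℕ) : Set (ℝ → ℝ) := {f | kMonotoneOn k f}

/-- `J_p = (-1/p, ∞)` for finite `p`, `[0,∞)` for `p = ∞`. -/
def Jset (p : ℝ≥0∞) : Set ℝ := if p = ∞ then Ici 0 else Ioi (-1 / p.toReal)

/-- `B_p^{α,β}`: measurable `f` with `‖w_{α,β} f‖_p = 1` on `[-1,1]` (the values of `f` outside
`[-1,1]` play no role). -/
def BSet (p : ℝ≥0∞) (α β : ℝ) : Set (ℝ → ℝ) :=
  {f | Measurable f ∧ LpOn (fun x => jacobi α β x * f x) p (-1) 1 = 1}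

end

/-!
Upper estimate. If `f` is `k`-monotone with `‖w f‖_p = 1`, then comparing `f` at a point with its
values on equispaced nodes at distance comparable to that from the endpoints gives the growth bound
`|f| ≤ C w⁻¹ ((1 + x) (1 - x))^(-1/p)`. This bounds the two endpoint parts of the modulus at once.
For the main part, a `k`th difference of `f` is an increment of its `(k - 1)`th divided differences,
which are increasing along the line; hence its integral over an interval is controlled by `sup |f|`
on a slightly larger one. Applied on the dyadic pieces `1 + x ∼ ρ`, `ρ ≥ h²`, with step
`h φ ∼ h √ρ`, this produces a geometric series whose ratio is less than `1` precisely when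
`2 / q - 2 / p < k - 1 + 1 / q`, which for `k ≥ 2` fails only at `(k, q, p) = (2, 1, ∞)`. The half
`x ≥ 0` follows by the reflection `x ↦ (-1)^k f(-x)`.

Lower estimate. The truncated power `(x - (1 - ε))₊^(k - 1)` with `ε ∼ δ²`, normalised, is
`k`-monotone, and its backward `k`th difference with step `ε` agrees with it on `[1 - ε, 1]`.
-/

/-! ### Divided differences -/

section DividedDifference

variable {F : Type*} [Field F] [DecidableEq F]

/-- The divided difference `[x₀, …, xₙ; ·]` over the finite set of nodes `s = {x₀, …, xₙ}`, as a
linear functional. -/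
noncomputable def dividedDiff (s : Finset F) : (F → F) →ₗ[F] F :=
  ∑ x ∈ s, Lagrange.nodalWeight s id x • LinearMap.proj x

lemma dividedDiff_apply (s : Finset F) (f : F → F) :
    dividedDiff s f = ∑ x ∈ s, Lagrange.nodalWeight s id x * f x := by
  simp [dividedDiff]

lemma dividedDiff_congr {s : Finset F} {f g : F → F} (hfg : ∀ x ∈ s, f x = g x) :
    dividedDiff s f = dividedDiff s g := by
  rw [dividedDiff_apply, dividedDiff_apply]
  exact Finset.sum_congr rfl fun x hx => by rw [hfg x hx]

lemma dividedDiff_eq_zero_of_forall_eq_zero {s : Finset F} {f : F → F} (hf : ∀ x ∈ s, f x = 0) :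
    dividedDiff s f = 0 :=
  (dividedDiff_congr (g := 0) hf).trans (map_zero _)

lemma dividedDiff_singleton (a : F) (f : F → F) : dividedDiff {a} f = f a := by
  simp [dividedDiff_apply, Lagrange.nodalWeight]

lemma dividedDiff_image {ι : Type*} [Fintype ι] [DecidableEq ι] {x : ι → F}
    (hx : Function.Injective x) (f : F → F) :
    dividedDiff (Finset.univ.image x) f =
      ∑ i, f (x i) / ∏ j ∈ Finset.univ.erase i, (x i - x j) := by
  rw [dividedDiff_apply, Finset.sum_image hx.injOn]
  refine Finset.sum_congr rfl fun i _ => ?_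
  rw [Lagrange.nodalWeight, ← Finset.image_erase hx, Finset.prod_image hx.injOn,
    Finset.prod_inv_distrib, div_eq_inv_mul]
  rfl

lemma dividedDiff_eval_eq_zero {s : Finset F} {P : Polynomial F}
    (hP : P.natDegree + 1 < s.card) : dividedDiff s (fun x => P.eval x) = 0 := by
  have hdeg : P.degree < s.card :=
    P.degree_le_natDegree.trans_lt (by exact_mod_cast (Nat.lt_succ_self _).trans hP)
  rw [← Polynomial.coeff_eq_zero_of_natDegree_lt (p := P) (n := s.card - 1) (by omega),
    Lagrange.coeff_eq_sum (injOn_id _) hdeg, dividedDiff_apply]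
  refine Finset.sum_congr rfl fun x _ => ?_
  rw [Lagrange.nodalWeight, Finset.prod_inv_distrib, div_eq_inv_mul, id]

lemma nodalWeight_insert_of_mem {a x : F} {s : Finset F} (ha : a ∉ s) (hx : x ∈ s) :
    Lagrange.nodalWeight (insert a s) id x = (x - a)⁻¹ * Lagrange.nodalWeight s id x := by
  have hax : a ≠ x := fun h => ha (h ▸ hx)
  rw [Lagrange.nodalWeight, Finset.erase_insert_of_ne hax, Finset.prod_insert (by simp [ha])]
  rfl

lemma dividedDiff_insert_sub_mul {a : F} {s : Finset F} (ha : a ∉ s) (g : F → F) :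
    dividedDiff (insert a s) (fun x => (x - a) * g x) = dividedDiff s g := by
  rw [dividedDiff_apply, dividedDiff_apply, Finset.sum_insert ha, sub_self, zero_mul, mul_zero,
    zero_add]
  refine Finset.sum_congr rfl fun x hx => ?_
  have hxa : x - a ≠ 0 := sub_ne_zero.2 fun h => ha (h ▸ hx)
  rw [nodalWeight_insert_of_mem ha hx]
  field_simp

lemma dividedDiff_insert_insert_sub_mul {a b : F} {s : Finset F} (ha : a ∉ s) (hb : b ∉ s)
    (hab : a ≠ b) (t : F) (g : F → F) :
    (b - a) * dividedDiff (insert a (insert b s)) (fun x => (x - t) * g x) =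
      (b - t) * dividedDiff (insert b s) g + (t - a) * dividedDiff (insert a s) g := by
  have hleft := dividedDiff_insert_sub_mul (a := a) (s := insert b s) (by simp [hab, ha]) g
  have hright := dividedDiff_insert_sub_mul (a := b) (s := insert a s) (by simp [hab.symm, hb]) g
  rw [Finset.insert_comm] at hright
  have hsplit : (b - a) • (fun x => (x - t) * g x) =
      (b - t) • (fun x => (x - a) * g x) + (t - a) • fun x => (x - b) * g x := by
    ext x
    simp only [Pi.smul_apply, Pi.add_apply, smul_eq_mul]
    ring
  rw [← smul_eq_mul, ← map_smul, hsplit, map_add, map_smul, map_smul, hleft, hright, smul_eq_mul,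
    smul_eq_mul]

lemma sub_mul_dividedDiff_insert_insert {a b : F} {s : Finset F} (ha : a ∉ s) (hb : b ∉ s)
    (hab : a ≠ b) (f : F → F) :
    (b - a) * dividedDiff (insert a (insert b s)) f =
      dividedDiff (insert b s) f - dividedDiff (insert a s) f := by
  have hleft := dividedDiff_insert_sub_mul (a := a) (s := insert b s) (by simp [hab, ha]) f
  have hright := dividedDiff_insert_sub_mul (a := b) (s := insert a s) (by simp [hab.symm, hb]) f
  rw [Finset.insert_comm] at hright
  rw [← hleft, ← hright, ← map_sub, ← smul_eq_mul, ← map_smul]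
  congr 1
  ext x
  simp only [Pi.smul_apply, Pi.sub_apply, smul_eq_mul]
  ring

end DividedDifference

lemma abs_nodalWeight_le {s : Finset ℝ} {τ x : ℝ} (hτ : 0 < τ)
    (hsep : (s : Set ℝ).Pairwise fun x y => τ ≤ |x - y|) (hx : x ∈ s) :
    |Lagrange.nodalWeight s id x| ≤ τ⁻¹ ^ (s.card - 1) := by
  rw [Lagrange.nodalWeight, Finset.abs_prod, ← Finset.card_erase_of_mem hx, ← Finset.prod_const]
  refine Finset.prod_le_prod (fun _ _ => abs_nonneg _) fun y hy => ?_
  rw [abs_inv]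
  obtain ⟨hne, hy⟩ := Finset.mem_erase.1 hy
  exact inv_anti₀ hτ (hsep hx hy hne.symm)

lemma abs_dividedDiff_le {s : Finset ℝ} {f : ℝ → ℝ} {τ M : ℝ} (hτ : 0 < τ)
    (hsep : (s : Set ℝ).Pairwise fun x y => τ ≤ |x - y|) (hM : ∀ x ∈ s, |f x| ≤ M) :
    |dividedDiff s f| ≤ s.card * (M * τ⁻¹ ^ (s.card - 1)) := by
  rw [dividedDiff_apply, ← nsmul_eq_mul]
  refine (Finset.abs_sum_le_sum_abs _ _).trans (Finset.sum_le_card_nsmul _ _ _ fun x hx => ?_)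
  rw [abs_mul, mul_comm]
  exact mul_le_mul (hM x hx) (abs_nodalWeight_le hτ hsep hx) (abs_nonneg _)
    ((abs_nonneg _).trans (hM x hx))

lemma kMonotoneOn_iff_dividedDiff_nonneg {k : ℕ} {f : ℝ → ℝ} :
    kMonotoneOn k f ↔
      ∀ s : Finset ℝ, s.card = k + 1 → ↑s ⊆ Ioo (-1 : ℝ) 1 → 0 ≤ dividedDiff s f := by
  constructor
  · intro hf s hs hsI
    have himage : Finset.univ.image (s.orderEmbOfFin hs) = s := by simp
    rw [← himage, dividedDiff_image (s.orderEmbOfFin hs).injective]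
    exact hf _ (s.orderEmbOfFin hs).injective fun i => hsI (s.orderEmbOfFin_mem hs i)
  · intro hf x hx hxI
    rw [← dividedDiff_image hx]
    refine hf _ (by rw [Finset.card_image_of_injective _ hx, Finset.card_fin]) ?_
    simpa [Set.subset_def] using hxI

lemma kMonotoneOn.dividedDiff_insert_le {k : ℕ} {f : ℝ → ℝ} (hf : kMonotoneOn k f)
    {s : Finset ℝ} {a b : ℝ} (hs : s.card + 1 = k) (ha : a ∉ s) (hb : b ∉ s) (hab : a < b)
    (hI : ↑(insert a (insert b s)) ⊆ Ioo (-1 : ℝ) 1) :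
    dividedDiff (insert a s) f ≤ dividedDiff (insert b s) f := by
  have hcard : (insert a (insert b s)).card = k + 1 := by
    rw [Finset.card_insert_of_notMem (by simp [hab.ne, ha]), Finset.card_insert_of_notMem hb, hs]
  have hnonneg := mul_nonneg (sub_pos.2 hab).le
    (kMonotoneOn_iff_dividedDiff_nonneg.1 hf _ hcard hI)
  rw [sub_mul_dividedDiff_insert_insert ha hb hab.ne] at hnonneg
  exact sub_nonneg.1 hnonneg

-- The common nodes `u` make the induction work: the nodes of `s` are moved one at a time to `t`.
lemma kMonotoneOn.dividedDiff_union_le {k : ℕ} {f : ℝ → ℝ} (hf : kMonotoneOn k f)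
    {s t u : Finset ℝ} (hst_card : s.card = t.card) (hk : s.card + u.card = k)
    (hI : ↑(s ∪ t ∪ u) ⊆ Ioo (-1 : ℝ) 1) (hsu : Disjoint s u) (htu : Disjoint t u)
    (hst : ∀ x ∈ s, ∀ y ∈ t, x < y) : dividedDiff (s ∪ u) f ≤ dividedDiff (t ∪ u) f := by
  induction s using Finset.induction_on generalizing t u with
  | empty => rw [Finset.card_eq_zero.1 hst_card.symm]
  | insert a s has ih =>
    rw [Finset.card_insert_of_notMem has] at hst_card hk
    obtain ⟨b, t, hbt, rfl, htcard⟩ := Finset.card_eq_succ.1 hst_card.symm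
    simp only [Finset.disjoint_insert_left] at hsu htu
    simp only [Finset.forall_mem_insert] at hst
    have hbs : b ∉ s := fun h => (hst.2 b h).1.false
    have hmove_last : dividedDiff (insert a (s ∪ u)) f ≤ dividedDiff (insert b (s ∪ u)) f := by
      refine hf.dividedDiff_insert_le ?_ (by simp [has, hsu.1]) (by simp [hbs, htu.1]) hst.1.1
        (Subset.trans ?_ hI)
      · rw [Finset.card_union_of_disjoint hsu.2]
        omega
      · exact Finset.coe_subset.2 fun x hx => by grind
    have hmove_rest : dividedDiff (s ∪ insert b u) f ≤ dividedDiff (t ∪ insert b u) f := by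
      refine ih htcard.symm ?_ (Subset.trans ?_ hI)
        (Finset.disjoint_insert_right.2 ⟨hbs, hsu.2⟩)
        (Finset.disjoint_insert_right.2 ⟨hbt, htu.2⟩) fun x hx => (hst.2 x hx).2
      · rw [Finset.card_insert_of_notMem htu.1]
        omega
      · exact Finset.coe_subset.2 fun x hx => by grind
    rw [Finset.union_insert, Finset.union_insert] at hmove_rest
    rw [Finset.insert_union, Finset.insert_union]
    exact hmove_last.trans hmove_rest

lemma kMonotoneOn.dividedDiff_le_of_lt {k : ℕ} {f : ℝ → ℝ} (hf : kMonotoneOn k f)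
    {s t : Finset ℝ} (hs : s.card = k) (ht : t.card = k) (hsI : ↑s ⊆ Ioo (-1 : ℝ) 1)
    (htI : ↑t ⊆ Ioo (-1 : ℝ) 1) (hst : ∀ x ∈ s, ∀ y ∈ t, x < y) :
    dividedDiff s f ≤ dividedDiff t f := by
  simpa using hf.dividedDiff_union_le (u := ∅) (hs.trans ht.symm) (by simpa using hs)
    (by simp [hsI, htI]) (Finset.disjoint_empty_right s) (Finset.disjoint_empty_right t) hst

/-! ### Equispaced nodes and truncated powers -/

/-- The `n` equispaced nodes `a, a + s, …, a + (n - 1) s`. -/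
noncomputable def arithNodes (a s : ℝ) (n : ℕ) : Finset ℝ :=
  (Finset.range n).image fun i : ℕ => a + i * s

lemma mem_arithNodes {a s x : ℝ} {n : ℕ} : x ∈ arithNodes a s n ↔ ∃ i < n, a + i * s = x := by
  simp [arithNodes]

lemma card_arithNodes (a : ℝ) {s : ℝ} (hs : s ≠ 0) (n : ℕ) : (arithNodes a s n).card = n := by
  rw [arithNodes, Finset.card_image_of_injective _ fun i j hij => ?_, Finset.card_range]
  simpa [hs] using hij

lemma arithNodes_subset_Icc {a s : ℝ} {n : ℕ} (hs : 0 ≤ s) :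
    ↑(arithNodes a s n) ⊆ Icc a (a + (n - 1) * s) := by
  intro x hx
  obtain ⟨i, hi, rfl⟩ := mem_arithNodes.1 hx
  have hin : (i : ℝ) ≤ n - 1 := by
    rw [le_sub_iff_add_le]
    exact_mod_cast hi
  exact ⟨le_add_of_nonneg_right (by positivity), by gcongr⟩

lemma pairwise_le_abs_sub_arithNodes {a s : ℝ} {n : ℕ} (hs : 0 ≤ s) :
    (arithNodes a s n : Set ℝ).Pairwise fun x y => s ≤ |x - y| := by
  intro x hx y hy hxy
  obtain ⟨i, -, rfl⟩ := mem_arithNodes.1 hx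
  obtain ⟨j, -, rfl⟩ := mem_arithNodes.1 hy
  have hij : (i : ℤ) - j ≠ 0 := fun h => hxy (by rw [show i = j by omega])
  have hone : (1 : ℝ) ≤ |(i : ℝ) - j| := by exact_mod_cast Int.one_le_abs hij
  rw [show a + i * s - (a + j * s) = ((i : ℝ) - j) * s by ring, abs_mul, abs_of_nonneg hs]
  exact le_mul_of_one_le_left hs hone

lemma arithNodes_succ (a s : ℝ) (n : ℕ) :
    arithNodes a s (n + 1) = insert (a + n * s) (arithNodes a s n) := by
  simp [arithNodes, Finset.range_add_one, Finset.image_insert]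

lemma arithNodes_succ' (a s : ℝ) (n : ℕ) :
    arithNodes a s (n + 1) = insert a (arithNodes (a + s) s n) := by
  simp only [arithNodes, Finset.range_add_one', Finset.image_insert, Finset.map_eq_image,
    Finset.image_image, Nat.cast_zero, zero_mul, add_zero]
  congr 2
  ext i
  change a + ((i + 1 : ℕ) : ℝ) * s = a + s + i * s
  push_cast
  ring

lemma fwdDiff_iter_eq_dividedDiff (f : ℝ → ℝ) {s : ℝ} (hs : 0 < s) (n : ℕ) (a : ℝ) :
    (fwdDiff s)^[n] f a = n.factorial * s ^ n * dividedDiff (arithNodes a s (n + 1)) f := by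
  induction n generalizing a with
  | zero => simp [arithNodes, dividedDiff_singleton]
  | succ n ih =>
    have ha : a ∉ arithNodes (a + s) s n := fun h => by
      linarith [(arithNodes_subset_Icc hs.le h).1]
    have hb : a + s + n * s ∉ arithNodes (a + s) s n := fun h => by
      linarith [(arithNodes_subset_Icc hs.le h).2]
    have hab : a < a + s + n * s := by
      have : 0 ≤ n * s := by positivity
      linarith
    have hrec := sub_mul_dividedDiff_insert_insert ha hb hab.ne f
    rw [← arithNodes_succ, ← arithNodes_succ', ← arithNodes_succ'] at hrec
    rw [Function.iterate_succ_apply', fwdDiff, ih, ih, Nat.factorial_succ]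
    push_cast
    linear_combination (-(n.factorial : ℝ) * s ^ n) * hrec

lemma kMonotoneOn.dividedDiff_arithNodes_le {k : ℕ} {f : ℝ → ℝ} (hf : kMonotoneOn k f)
    {a b s S : ℝ} (hs : 0 < s) (hS : 0 < S) (ha : -1 < a) (hab : a + (k - 1) * s < b)
    (hb : b + (k - 1) * S < 1) :
    dividedDiff (arithNodes a s k) f ≤ dividedDiff (arithNodes b S k) f := by
  have hleft : ↑(arithNodes a s k) ⊆ Icc a (a + (k - 1) * s) := arithNodes_subset_Icc hs.le
  have hright : ↑(arithNodes b S k) ⊆ Icc b (b + (k - 1) * S) := arithNodes_subset_Icc hS.le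
  have hst : ∀ x ∈ arithNodes a s k, ∀ y ∈ arithNodes b S k, x < y := fun x hx y hy =>
    ((hleft hx).2.trans_lt hab).trans_le (hright hy).1
  rcases k.eq_zero_or_pos with rfl | hk
  · simp [arithNodes]
  · have ha_mem : a ∈ arithNodes a s k := mem_arithNodes.2 ⟨0, hk, by simp⟩
    have hb_mem : b ∈ arithNodes b S k := mem_arithNodes.2 ⟨0, hk, by simp⟩
    refine hf.dividedDiff_le_of_lt (card_arithNodes a hs.ne' k) (card_arithNodes b hS.ne' k)
      (fun x hx => ⟨ha.trans_le (hleft hx).1, ?_⟩) (fun y hy => ⟨?_, (hright hy).2.trans_lt hb⟩) hst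
    · exact (hst x hx b hb_mem).trans_le ((hright hb_mem).2.trans hb.le)
    · exact ha.trans (hst a ha_mem y hy)

lemma abs_dividedDiff_arithNodes_le {f : ℝ → ℝ} {a s M : ℝ} {n : ℕ} (hs : 0 < s)
    (hM : ∀ x ∈ Icc a (a + (n - 1) * s), |f x| ≤ M) :
    |dividedDiff (arithNodes a s n) f| ≤ n * (M * s⁻¹ ^ (n - 1)) := by
  simpa only [card_arithNodes a hs.ne'] using
    abs_dividedDiff_le hs (pairwise_le_abs_sub_arithNodes hs.le)
      fun x hx => hM x (arithNodes_subset_Icc hs.le hx)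

/-- The truncated power `(x - t)₊ⁿ`, the extremal function of the lower estimate; at `x ≤ t` it is
`0` also for `n = 0`. -/
noncomputable def truncPow (t : ℝ) (n : ℕ) : ℝ → ℝ := (Ioi t).indicator fun x => (x - t) ^ n

lemma truncPow_of_lt {t x : ℝ} (h : t < x) (n : ℕ) : truncPow t n x = (x - t) ^ n :=
  indicator_of_mem (mem_Ioi.2 h) _

lemma truncPow_of_le {t x : ℝ} (h : x ≤ t) (n : ℕ) : truncPow t n x = 0 :=
  indicator_of_notMem (notMem_Ioi.2 h) _

lemma truncPow_succ (t : ℝ) (n : ℕ) :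
    truncPow t (n + 1) = fun x => (x - t) * truncPow t n x := by
  ext x
  rcases lt_or_ge t x with h | h
  · rw [truncPow_of_lt h, truncPow_of_lt h, pow_succ']
  · rw [truncPow_of_le h, truncPow_of_le h, mul_zero]

lemma truncPow_nonneg (t : ℝ) (n : ℕ) (x : ℝ) : 0 ≤ truncPow t n x :=
  indicator_nonneg (fun _ hx => pow_nonneg (sub_nonneg.2 (mem_Ioi.1 hx).le) n) x

lemma measurable_truncPow (t : ℝ) (n : ℕ) : Measurable (truncPow t n) :=
  ((measurable_id.sub_const t).pow_const n).indicator measurableSet_Ioi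

lemma dividedDiff_truncPow_nonneg (t : ℝ) {n : ℕ} {s : Finset ℝ} (hs : s.card = n + 2) :
    0 ≤ dividedDiff s (truncPow t n) := by
  induction n using Nat.strong_induction_on generalizing s with | _ n ih =>
  by_cases hle : ∀ x ∈ s, x ≤ t
  · exact (dividedDiff_eq_zero_of_forall_eq_zero fun x hx => truncPow_of_le (hle x hx) n).ge
  by_cases hlt : ∀ x ∈ s, t < x
  · have hpoly : ∀ x ∈ s, truncPow t n x = ((.X - .C t) ^ n : Polynomial ℝ).eval x := fun x hx => by
      rw [truncPow_of_lt (hlt x hx)]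
      simp
    rw [dividedDiff_congr hpoly, dividedDiff_eval_eq_zero]
    rw [Polynomial.natDegree_pow, Polynomial.natDegree_X_sub_C, hs]
    omega
  push Not at hle hlt
  obtain ⟨b, hbs, htb⟩ := hle
  obtain ⟨a, has, hat⟩ := hlt
  have hab : a < b := hat.trans_lt htb
  obtain ⟨u, hbu, rfl⟩ : ∃ u, b ∉ u ∧ insert b u = s := ⟨_, s.notMem_erase b, s.insert_erase hbs⟩
  obtain ⟨u, hau, rfl⟩ : ∃ v, a ∉ v ∧ insert a v = u :=
    ⟨_, u.notMem_erase a, u.insert_erase (by simpa [hab.ne] using has)⟩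
  simp only [Finset.mem_insert, not_or] at hbu
  rw [Finset.insert_comm] at hs ⊢
  rw [Finset.card_insert_of_notMem (by simp [hab.ne, hau]),
    Finset.card_insert_of_notMem hbu.2] at hs
  refine nonneg_of_mul_nonneg_right ?_ (sub_pos.2 hab)
  rcases n with _ | n
  · obtain rfl : u = ∅ := by simpa using hs
    rw [sub_mul_dividedDiff_insert_insert hau hbu.2 hab.ne]
    simp [dividedDiff_singleton, truncPow_of_le hat, truncPow_nonneg]
  · rw [truncPow_succ, dividedDiff_insert_insert_sub_mul hau hbu.2 hab.ne]
    have hright := ih n n.lt_succ_self (s := insert b u)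
      (by rw [Finset.card_insert_of_notMem hbu.2]; omega)
    have hleft := ih n n.lt_succ_self (s := insert a u)
      (by rw [Finset.card_insert_of_notMem hau]; omega)
    exact add_nonneg (mul_nonneg (sub_nonneg.2 htb.le) hright)
      (mul_nonneg (sub_nonneg.2 hat) hleft)

lemma kMonotoneOn_truncPow {k : ℕ} (hk : k ≠ 0) (t : ℝ) : kMonotoneOn k (truncPow t (k - 1)) :=
  kMonotoneOn_iff_dividedDiff_nonneg.2 fun s hs _ =>
    dividedDiff_truncPow_nonneg t (n := k - 1) (s := s) (by omega)

lemma kMonotoneOn.const_mul {k : ℕ} {f : ℝ → ℝ} (hf : kMonotoneOn k f) {c : ℝ} (hc : 0 ≤ c) :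
    kMonotoneOn k (fun x => c * f x) := by
  intro x hx hxI
  simp only [mul_div_assoc, ← Finset.mul_sum]
  exact mul_nonneg hc (hf x hx hxI)

/-! ### Jacobi weights and `Lᵖ` norms -/

lemma rpow_le_rpow_abs_mul_rpow {u v c : ℝ} (hu : 0 < u) (hv : 0 < v) (huv : u ≤ c * v)
    (hvu : v ≤ c * u) (γ : ℝ) : u ^ γ ≤ c ^ |γ| * v ^ γ := by
  have hc : 0 < c := pos_of_mul_pos_left (hu.trans_le huv) hv.le
  rcases le_total 0 γ with hγ | hγ
  · rw [abs_of_nonneg hγ, ← Real.mul_rpow hc.le hv.le]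
    exact Real.rpow_le_rpow hu.le huv hγ
  · have hu' : c⁻¹ * v ≤ u := (inv_mul_le_iff₀ hc).2 hvu
    rw [abs_of_nonpos hγ, Real.rpow_neg hc.le, ← Real.inv_rpow hc.le,
      ← Real.mul_rpow (by positivity) hv.le]
    exact Real.rpow_le_rpow_of_nonpos (by positivity) hu' hγ

lemma jacobi_pos {x : ℝ} (hx : x ∈ Ioo (-1 : ℝ) 1) (α β : ℝ) : 0 < jacobi α β x :=
  mul_pos (Real.rpow_pos_of_pos (by linarith [hx.1]) α)
    (Real.rpow_pos_of_pos (by linarith [hx.2]) β)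

lemma jacobi_nonneg {x : ℝ} (hx : x ∈ Icc (-1 : ℝ) 1) (α β : ℝ) : 0 ≤ jacobi α β x :=
  mul_nonneg (Real.rpow_nonneg (by linarith [hx.1]) α) (Real.rpow_nonneg (by linarith [hx.2]) β)

lemma jacobi_neg (α β x : ℝ) : jacobi α β (-x) = jacobi β α x := by
  rw [jacobi, jacobi, sub_neg_eq_add, ← sub_eq_add_neg, mul_comm]

lemma jacobi_mul_jacobi {x : ℝ} (hx : x ∈ Ioo (-1 : ℝ) 1) (α β α' β' : ℝ) :
    jacobi α β x * jacobi α' β' x = jacobi (α + α') (β + β') x := by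
  simp only [jacobi]
  rw [Real.rpow_add (by linarith [hx.1]), Real.rpow_add (by linarith [hx.2])]
  ring

lemma jacobi_le_mul_jacobi {x y c : ℝ} (hx : x ∈ Ioo (-1 : ℝ) 1) (hy : y ∈ Ioo (-1 : ℝ) 1)
    (hxy : 1 + x ≤ c * (1 + y)) (hyx : 1 + y ≤ c * (1 + x)) (hxy' : 1 - x ≤ c * (1 - y))
    (hyx' : 1 - y ≤ c * (1 - x)) (α β : ℝ) :
    jacobi α β x ≤ c ^ |α| * c ^ |β| * jacobi α β y := by
  have hx0 : 0 < 1 + x := by linarith [hx.1]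
  have hx1 : 0 < 1 - x := by linarith [hx.2]
  have hy0 : 0 < 1 + y := by linarith [hy.1]
  have hy1 : 0 < 1 - y := by linarith [hy.2]
  have hleft := rpow_le_rpow_abs_mul_rpow hx0 hy0 hxy hyx α
  have hright := rpow_le_rpow_abs_mul_rpow hx1 hy1 hxy' hyx' β
  calc jacobi α β x ≤ (c ^ |α| * (1 + y) ^ α) * (c ^ |β| * (1 - y) ^ β) :=
        mul_le_mul hleft hright (by positivity) ((by positivity : 0 ≤ (1 + x) ^ α).trans hleft)
    _ = c ^ |α| * c ^ |β| * jacobi α β y := by rw [jacobi]; ring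

lemma jacobi_le_mul_one_add_rpow {x c : ℝ} (hx : x ∈ Ico (-1) 1) (hxc : 1 - x ≤ c)
    (hcx : 1 ≤ c * (1 - x)) (α β : ℝ) : jacobi α β x ≤ c ^ |β| * (1 + x) ^ α := by
  have hβ := rpow_le_rpow_abs_mul_rpow (sub_pos.2 hx.2) one_pos (by simpa using hxc) hcx β
  rw [Real.one_rpow, mul_one] at hβ
  rw [jacobi, mul_comm]
  exact mul_le_mul_of_nonneg_right hβ (Real.rpow_nonneg (by linarith [hx.1]) α)

lemma neg_one_lt_mul_toReal_of_mem_Jset {p : ℝ≥0∞} (hp0 : p ≠ 0) (hp : p ≠ ∞) {γ : ℝ}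
    (hγ : γ ∈ Jset p) :
    -1 < γ * p.toReal := by
  rw [Jset, if_neg hp] at hγ
  exact (div_lt_iff₀ (ENNReal.toReal_pos hp0 hp)).1 hγ

lemma LpOn_comp_neg (g : ℝ → ℝ) (p : ℝ≥0∞) (a b : ℝ) :
    LpOn (fun x => g (-x)) p (-b) (-a) = LpOn g p a b := by
  have hmp := (Measure.measurePreserving_neg (volume : Measure ℝ)).restrict_preimage
    (measurableSet_Icc (a := a) (b := b))
  rw [Set.neg_preimage, Set.neg_Icc] at hmp
  rw [LpOn, LpOn, ← hmp.map_eq]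
  exact (MeasurableEquiv.neg ℝ).measurableEmbedding.eLpNorm_map_measure.symm

lemma LpOn_const_mul (c : ℝ) (g : ℝ → ℝ) (p : ℝ≥0∞) (a b : ℝ) :
    LpOn (fun x => c * g x) p a b = ‖c‖ₑ * LpOn g p a b :=
  eLpNorm_const_smul c g p _

lemma LpOn_congr {g g' : ℝ → ℝ} {a b : ℝ} (h : ∀ x ∈ Icc a b, g x = g' x) (p : ℝ≥0∞) :
    LpOn g p a b = LpOn g' p a b :=
  eLpNorm_congr_ae ((ae_restrict_iff' measurableSet_Icc).2 (.of_forall h))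

lemma LpOn_eq_of_forall_lt_eq_zero {g : ℝ → ℝ} {a a' : ℝ} (ha : a ≤ a')
    (hg : ∀ x < a', g x = 0) (p : ℝ≥0∞) (b : ℝ) : LpOn g p a b = LpOn g p a' b := by
  have hsupp : g.support ⊆ Ici a' := fun x hx => not_lt.1 fun h => hx (hg x h)
  rw [LpOn, LpOn, ← eLpNorm_restrict_eq_of_support_subset hsupp,
    Measure.restrict_restrict measurableSet_Ici, ← Ici_inter_Iic, ← inter_assoc, Ici_inter_Ici,
    sup_eq_left.2 ha, Ici_inter_Iic]

lemma setLIntegral_one_add_rpow {γ A : ℝ} (hγ : -1 < γ) (hA : 0 ≤ A) :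
    ∫⁻ x in Icc (-1) (-1 + A), ENNReal.ofReal ((1 + x) ^ γ) =
      ENNReal.ofReal (A ^ (γ + 1) / (γ + 1)) := by
  have hle : (-1 : ℝ) ≤ -1 + A := by linarith
  have hint : IntervalIntegrable (fun x : ℝ => (1 + x) ^ γ) volume (-1) (-1 + A) := by
    convert (intervalIntegral.intervalIntegrable_rpow' (a := 0) (b := A) hγ).comp_add_left 1
      using 1 <;> ring
  have hI : ∫ x in (-1 : ℝ)..(-1 + A), (1 + x) ^ γ = A ^ (γ + 1) / (γ + 1) := by
    rw [intervalIntegral.integral_comp_add_left (fun x : ℝ => x ^ γ) 1, integral_rpow (.inl hγ),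
      add_neg_cancel, add_neg_cancel_left, Real.zero_rpow (by linarith), sub_zero]
  rw [← hI, intervalIntegral.integral_of_le hle, ← integral_Icc_eq_integral_Ioc,
    ofReal_integral_eq_lintegral_ofReal
      ((intervalIntegrable_iff_integrableOn_Icc_of_le hle).1 hint)
      ((ae_restrict_iff' measurableSet_Icc).2 (.of_forall fun x hx =>
        Real.rpow_nonneg (by linarith [hx.1]) γ))]

lemma setLIntegral_enorm_rpow_le_of_le_rpow {g : ℝ → ℝ} {s : Set ℝ} {γ A C r : ℝ}
    (hs : MeasurableSet s) (hsA : s ⊆ Ioc (-1) (-1 + A)) (hr : 0 < r) (hγ : -1 < γ * r)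
    (hA : 0 ≤ A) (hC : 0 ≤ C) (hg : ∀ x ∈ s, |g x| ≤ C * (1 + x) ^ γ) :
    ∫⁻ x in s, ‖g x‖ₑ ^ r ≤ ENNReal.ofReal (C ^ r * (A ^ (γ * r + 1) / (γ * r + 1))) := by
  calc ∫⁻ x in s, ‖g x‖ₑ ^ r
      ≤ ∫⁻ x in s, ENNReal.ofReal (C ^ r) * ENNReal.ofReal ((1 + x) ^ (γ * r)) := by
        refine setLIntegral_mono' hs fun x hx => ?_
        have hx0 : 0 ≤ 1 + x := by linarith [(hsA hx).1]
        rw [Real.enorm_eq_ofReal_abs, ENNReal.ofReal_rpow_of_nonneg (abs_nonneg _) hr.le,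
          ← ENNReal.ofReal_mul (by positivity), Real.rpow_mul hx0,
          ← Real.mul_rpow hC (by positivity)]
        exact ENNReal.ofReal_le_ofReal (Real.rpow_le_rpow (abs_nonneg _) (hg x hx) hr.le)
    _ ≤ ∫⁻ x in Icc (-1) (-1 + A), ENNReal.ofReal (C ^ r) * ENNReal.ofReal ((1 + x) ^ (γ * r)) :=
        lintegral_mono_set (hsA.trans Ioc_subset_Icc_self)
    _ = ENNReal.ofReal (C ^ r * (A ^ (γ * r + 1) / (γ * r + 1))) := by
        rw [lintegral_const_mul' _ _ ENNReal.ofReal_ne_top, setLIntegral_one_add_rpow hγ hA,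
          ENNReal.ofReal_mul (by positivity)]

lemma LpOn_le_of_setLIntegral_le {g : ℝ → ℝ} {q : ℝ≥0∞} {a b X : ℝ} (hq0 : q ≠ 0)
    (hq : q ≠ ∞) (hX : 0 ≤ X)
    (h : ∫⁻ x in Icc a b, ‖g x‖ₑ ^ q.toReal ≤ ENNReal.ofReal X) :
    LpOn g q a b ≤ ENNReal.ofReal (X ^ (1 / q.toReal)) := by
  rw [LpOn, eLpNorm_eq_lintegral_rpow_enorm_toReal hq0 hq,
    ← ENNReal.ofReal_rpow_of_nonneg hX (by positivity)]
  exact ENNReal.rpow_le_rpow h (by positivity)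

lemma LpOn_top_le {g : ℝ → ℝ} {a b X : ℝ} (hg : ∀ x ∈ Ioc a b, |g x| ≤ X) :
    LpOn g ∞ a b ≤ ENNReal.ofReal X := by
  rw [LpOn, eLpNorm_exponent_top, ← restrict_Ioc_eq_restrict_Icc]
  exact eLpNormEssSup_le_of_ae_bound ((ae_restrict_iff' measurableSet_Ioc).2 (.of_forall hg))

lemma exists_LpOn_le_of_le_rpow {q : ℝ≥0∞} (hq0 : q ≠ 0) {γ : ℝ} (hγ : γ ∈ Jset q) :
    ∃ K > 0, ∀ (g : ℝ → ℝ) (A C : ℝ), 0 ≤ A → 0 ≤ C →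
      (∀ x ∈ Ioc (-1) (-1 + A), |g x| ≤ C * (1 + x) ^ γ) →
      LpOn g q (-1) (-1 + A) ≤ ENNReal.ofReal (K * C * A ^ (γ + 1 / q.toReal)) := by
  rcases eq_or_ne q ∞ with rfl | hq
  · have hγ0 : 0 ≤ γ := by simpa [Jset] using hγ
    refine ⟨1, one_pos, fun g A C _ hC hg => LpOn_top_le fun x hx => (hg x hx).trans ?_⟩
    rw [one_mul, ENNReal.toReal_top, div_zero, add_zero]
    exact mul_le_mul_of_nonneg_left
      (Real.rpow_le_rpow (by linarith [hx.1]) (by linarith [hx.2]) hγ0) hC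
  · have hr : 0 < q.toReal := ENNReal.toReal_pos hq0 hq
    have hγr := neg_one_lt_mul_toReal_of_mem_Jset hq0 hq hγ
    have hγ1 : 0 < γ * q.toReal + 1 := by linarith
    refine ⟨(γ * q.toReal + 1)⁻¹ ^ (1 / q.toReal), by positivity, fun g A C hA hC hg => ?_⟩
    have hint := setLIntegral_enorm_rpow_le_of_le_rpow measurableSet_Ioc Subset.rfl hr hγr hA hC hg
    rw [restrict_Ioc_eq_restrict_Icc] at hint
    refine (LpOn_le_of_setLIntegral_le hq0 hq (by positivity) hint).trans_eq ?_
    rw [Real.mul_rpow (by positivity) (by positivity), ← Real.rpow_mul hC,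
      mul_one_div_cancel hr.ne', Real.rpow_one, div_eq_mul_inv,
      Real.mul_rpow (by positivity) (by positivity), ← Real.rpow_mul hA,
      show (γ * q.toReal + 1) * (1 / q.toReal) = γ + 1 / q.toReal by field_simp]
    ring_nf

lemma ofReal_mul_rpow_le_LpOn {g : ℝ → ℝ} {p : ℝ≥0∞} (hp : p ≠ 0) {a b a' b' c : ℝ} (ha : a ≤ a')
    (hab : a' < b') (hb : b' ≤ b) (hc : 0 ≤ c) (hg : ∀ x ∈ Icc a' b', c ≤ |g x|) :
    ENNReal.ofReal (c * (b' - a') ^ (1 / p.toReal)) ≤ LpOn g p a b := by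
  have hμ : volume.restrict (Icc a' b') ≠ 0 := by
    rw [Ne, Measure.restrict_eq_zero, Real.volume_Icc, ENNReal.ofReal_eq_zero]
    linarith
  have hconst : eLpNorm (fun _ => c) p (volume.restrict (Icc a' b')) =
      ENNReal.ofReal (c * (b' - a') ^ (1 / p.toReal)) := by
    rw [eLpNorm_const c hp hμ, Measure.restrict_apply_univ, Real.volume_Icc,
      Real.enorm_eq_ofReal hc, ENNReal.ofReal_rpow_of_nonneg (by linarith) (by positivity),
      ← ENNReal.ofReal_mul hc]
  rw [← hconst]
  calc eLpNorm (fun _ => c) p (volume.restrict (Icc a' b'))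
      ≤ eLpNorm g p (volume.restrict (Icc a' b')) :=
        eLpNorm_mono_ae ((ae_restrict_iff' measurableSet_Icc).2 (.of_forall fun x hx => by
          rw [Real.norm_of_nonneg hc]
          exact hg x hx))
    _ ≤ LpOn g p a b := eLpNorm_mono_measure _ (Measure.restrict_mono (Icc_subset_Icc ha hb) le_rfl)

/-! ### The lower estimate -/

lemma truncPow_le_pow {t x b : ℝ} (hb : 0 ≤ b) (hx : x - t ≤ b) (n : ℕ) :
    truncPow t n x ≤ b ^ n := by
  rcases lt_or_ge t x with h | h
  · rw [truncPow_of_lt h]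
    exact pow_le_pow_left₀ (by linarith) hx n
  · rw [truncPow_of_le h]
    positivity

lemma LpOn_jacobi_mul_truncPow_eq {ε : ℝ} (hε : ε ≤ 2) (α β : ℝ) (n : ℕ) (p : ℝ≥0∞) :
    LpOn (fun x => jacobi α β x * truncPow (1 - ε) n x) p (-1) 1 =
      LpOn (fun x => jacobi α β x * truncPow (1 - ε) n x) p (1 - ε) 1 :=
  LpOn_eq_of_forall_lt_eq_zero (by linarith)
    (fun x hx => by rw [truncPow_of_le hx.le, mul_zero]) p 1

lemma exists_LpOn_jacobi_mul_truncPow_le {p : ℝ≥0∞} (hp : p ≠ 0) (α : ℝ) {β : ℝ}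
    (hβ : β ∈ Jset p) (n : ℕ) :
    ∃ C > 0, ∀ ε ∈ Ioc (0 : ℝ) 1,
      LpOn (fun x => jacobi α β x * truncPow (1 - ε) n x) p (-1) 1 ≤
        ENNReal.ofReal (C * ε ^ (β + n + 1 / p.toReal)) := by
  obtain ⟨K, hK, hLp⟩ := exists_LpOn_le_of_le_rpow hp hβ
  refine ⟨K * 2 ^ |α|, by positivity, fun ε ⟨hε, hε1⟩ => ?_⟩
  rw [LpOn_jacobi_mul_truncPow_eq (by linarith), ← LpOn_comp_neg,
    show -(1 - ε) = -1 + ε by ring]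
  refine (hLp _ ε (2 ^ |α| * ε ^ n) hε.le (by positivity) fun x hx => ?_).trans_eq ?_
  · have hxI : x ∈ Ico (-1) 1 := ⟨hx.1.le, by linarith [hx.2]⟩
    have hpow : 0 ≤ (1 + x) ^ β := Real.rpow_nonneg (by linarith [hx.1]) β
    have hweight := jacobi_le_mul_one_add_rpow hxI (c := 2) (by linarith [hx.1])
      (by linarith [hx.2]) β α
    have htrunc := truncPow_le_pow hε.le (t := 1 - ε) (x := -x) (by linarith [hx.1]) n
    rw [jacobi_neg, abs_mul, abs_of_nonneg (jacobi_nonneg ⟨hxI.1, hxI.2.le⟩ β α),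
      abs_of_nonneg (truncPow_nonneg _ _ _)]
    calc jacobi β α x * truncPow (1 - ε) n (-x) ≤ 2 ^ |α| * (1 + x) ^ β * ε ^ n :=
          mul_le_mul hweight htrunc (truncPow_nonneg _ _ _) (by positivity)
      _ = 2 ^ |α| * ε ^ n * (1 + x) ^ β := by ring
  · rw [show β + n + 1 / p.toReal = n + (β + 1 / p.toReal) by ring, Real.rpow_add hε n,
      Real.rpow_natCast]
    ring_nf

lemma exists_le_LpOn_jacobi_mul_truncPow {p : ℝ≥0∞} (hp : p ≠ 0) (α β : ℝ) (n : ℕ) :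
    ∃ c > 0, ∀ ε ∈ Ioc (0 : ℝ) 1,
      ENNReal.ofReal (c * ε ^ (β + n + 1 / p.toReal)) ≤
        LpOn (fun x => jacobi α β x * truncPow (1 - ε) n x) p (1 - ε) 1 := by
  refine ⟨(2 ^ |α|)⁻¹ * (4 ^ |β|)⁻¹ * 2⁻¹ ^ n * 4⁻¹ ^ (1 / p.toReal), by positivity,
    fun ε ⟨hε, hε1⟩ => ?_⟩
  refine le_trans (le_of_eq ?_) (ofReal_mul_rpow_le_LpOn hp (a' := 1 - ε / 2) (b' := 1 - ε / 4)
    (c := (2 ^ |α|)⁻¹ * ((4 ^ |β|)⁻¹ * ε ^ β) * (2⁻¹ * ε) ^ n) (by linarith) (by linarith)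
    (by linarith) (by positivity) fun x hx => ?_)
  · rw [show 1 - ε / 4 - (1 - ε / 2) = 4⁻¹ * ε by ring, Real.mul_rpow (by norm_num) hε.le,
      Real.rpow_add hε, Real.rpow_add hε, Real.rpow_natCast, mul_pow]
    ring_nf
  · have hx0 : 0 < 1 + x := by linarith [hx.1]
    have hx1 : 0 < 1 - x := by linarith [hx.2]
    have hα : (2 ^ |α|)⁻¹ ≤ (1 + x) ^ α := by
      rw [inv_le_iff_one_le_mul₀' (by positivity)]
      simpa using rpow_le_rpow_abs_mul_rpow one_pos hx0 (c := 2) (by linarith [hx.1])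
        (by linarith [hx.2]) α
    have hβ : (4 ^ |β|)⁻¹ * ε ^ β ≤ (1 - x) ^ β := by
      rw [inv_mul_le_iff₀ (by positivity)]
      exact rpow_le_rpow_abs_mul_rpow hε hx1 (by linarith [hx.2]) (by linarith [hx.1]) β
    have htrunc : (2⁻¹ * ε) ^ n ≤ truncPow (1 - ε) n x := by
      rw [truncPow_of_lt (by linarith [hx.1])]
      exact pow_le_pow_left₀ (by positivity) (by linarith [hx.1]) n
    refine le_trans ?_ (le_abs_self _)
    rw [jacobi]
    gcongr

lemma symmDelta_const_mul (k : ℕ) (h c : ℝ) (f : ℝ → ℝ) (x : ℝ) :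
    symmDelta k h (fun y => c * f y) x = c * symmDelta k h f x := by
  simp only [symmDelta, mul_ite, mul_zero, Finset.mul_sum, mul_left_comm _ c]

lemma omegaDT_const_mul (k : ℕ) (c : ℝ) (f : ℝ → ℝ) (δ : ℝ) (w : ℝ → ℝ) (q : ℝ≥0∞) :
    omegaDT k (fun y => c * f y) δ w q = ‖c‖ₑ * omegaDT k f δ w q := by
  simp only [omegaDT, OmegaMain, OmegaFwd, OmegaBwd, symmDelta_const_mul, mul_left_comm _ c,
    LpOn_const_mul, ENNReal.mul_iSup, mul_add]

lemma omegaDT_le_LpOn_mul_iSup {k : ℕ} {f : ℝ → ℝ} (hf : Measurable f) (hfk : kMonotoneOn k f)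
    {p : ℝ≥0∞} {α β : ℝ} (hpos : LpOn (fun x => jacobi α β x * f x) p (-1) 1 ≠ 0)
    (htop : LpOn (fun x => jacobi α β x * f x) p (-1) 1 ≠ ∞) (δ : ℝ) (q : ℝ≥0∞) :
    omegaDT k f δ (jacobi α β) q ≤ LpOn (fun x => jacobi α β x * f x) p (-1) 1 *
      ⨆ g ∈ BSet p α β ∩ MSet k, omegaDT k g δ (jacobi α β) q := by
  set N := LpOn (fun x => jacobi α β x * f x) p (-1) 1 with hN
  have henorm : ‖N.toReal⁻¹‖ₑ = N⁻¹ := by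
    rw [enorm_inv (ENNReal.toReal_ne_zero.2 ⟨hpos, htop⟩),
      Real.enorm_eq_ofReal ENNReal.toReal_nonneg, ENNReal.ofReal_toReal htop]
  have hmem : (fun x => N.toReal⁻¹ * f x) ∈ BSet p α β ∩ MSet k := by
    refine ⟨⟨hf.const_mul _, ?_⟩, hfk.const_mul (by positivity)⟩
    simp only [mul_left_comm _ N.toReal⁻¹, LpOn_const_mul]
    rw [henorm, ← hN, ENNReal.inv_mul_cancel hpos htop]
  rw [mul_comm, ← ENNReal.div_le_iff hpos htop, div_eq_mul_inv, mul_comm, ← henorm,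
    ← omegaDT_const_mul]
  exact le_iSup₂ (f := fun g _ => omegaDT k g δ (jacobi α β) q) _ hmem

-- The step is so long that only the rightmost node of the difference meets the support.
lemma symmDelta_truncPow {k : ℕ} {ε x : ℝ} (hε : 0 ≤ ε) (hkε : (k + 1) * ε ≤ 2)
    (hx : x ∈ Icc (1 - ε) 1) (n : ℕ) :
    symmDelta k ε (truncPow (1 - ε) n) (x - k * ε / 2) = truncPow (1 - ε) n x := by
  have hkε0 : 0 ≤ k * ε := by positivity
  rw [symmDelta, if_pos ⟨⟨by linarith [hx.1], by linarith [hx.2]⟩,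
    ⟨by linarith [hx.1], by linarith [hx.2]⟩⟩, Finset.sum_eq_single k _ (by simp)]
  · simp [show x - k * ε / 2 - k * ε / 2 + k * ε = x by ring]
  · intro i hi hik
    have hi' : (i : ℝ) + 1 ≤ k := by
      exact_mod_cast (Nat.lt_succ_iff.1 (Finset.mem_range.1 hi)).lt_of_ne hik
    have hiε : (i + 1) * ε ≤ k * ε := by gcongr
    rw [truncPow_of_le (by linarith [hx.2]), mul_zero]

lemma LpOn_truncPow_le_omegaDT {k : ℕ} {δ : ℝ} (hδ : 0 < δ) (hk : k ≠ 0)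
    (hkδ : (k : ℝ) ^ 2 * (k + 1) * δ ^ 2 ≤ 1) (w : ℝ → ℝ) (q : ℝ≥0∞) (n : ℕ) :
    LpOn (fun x => w x * truncPow (1 - 2 * k ^ 2 * δ ^ 2) n x) q (1 - 2 * k ^ 2 * δ ^ 2) 1 ≤
      omegaDT k (truncPow (1 - 2 * k ^ 2 * δ ^ 2) n) δ w q := by
  have hε : 0 < 2 * (k : ℝ) ^ 2 * δ ^ 2 := by positivity
  rw [LpOn_congr fun x hx => by rw [← symmDelta_truncPow hε.le (by linarith) hx n]]
  refine le_trans ?_ (le_add_self : OmegaBwd k _ δ w q ≤ _)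
  exact le_iSup₂ (f := fun h _ => LpOn (fun x => w x * symmDelta k h _ (x - k * h / 2)) q _ 1)
    (2 * (k : ℝ) ^ 2 * δ ^ 2) ⟨hε, le_rfl⟩

lemma exists_rpow_le_iSup_omegaDT {k : ℕ} (hk : k ≠ 0) {q p : ℝ≥0∞} (hq : q ≠ 0) (hp : p ≠ 0)
    (α : ℝ) {β : ℝ} (hβ : β ∈ Jset p) :
    ∃ c > (0 : ℝ), ∀ δ : ℝ, 0 < δ → (k : ℝ) ^ 2 * (k + 1) * δ ^ 2 ≤ 1 →
      ENNReal.ofReal (c * (2 * k ^ 2 * δ ^ 2) ^ (1 / q.toReal - 1 / p.toReal)) ≤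
        ⨆ f ∈ BSet p α β ∩ MSet k, omegaDT k f δ (jacobi α β) q := by
  obtain ⟨C, hC, hupper⟩ := exists_LpOn_jacobi_mul_truncPow_le hp α hβ (k - 1)
  obtain ⟨cp, hcp, hlower_p⟩ := exists_le_LpOn_jacobi_mul_truncPow hp α β (k - 1)
  obtain ⟨cq, hcq, hlower_q⟩ := exists_le_LpOn_jacobi_mul_truncPow hq α β (k - 1)
  refine ⟨cq / C, by positivity, fun δ hδ hkδ => ?_⟩
  have hmodulus := LpOn_truncPow_le_omegaDT hδ hk hkδ (jacobi α β) q (k - 1)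
  set ε : ℝ := 2 * k ^ 2 * δ ^ 2
  have hε0 : 0 < ε := by positivity
  have hk1 : (1 : ℝ) ≤ k := by exact_mod_cast Nat.one_le_iff_ne_zero.2 hk
  have hε : ε ∈ Ioc 0 1 := ⟨hε0, by nlinarith [sq_nonneg (k * δ)]⟩
  have hN_pos : LpOn (fun x => jacobi α β x * truncPow (1 - ε) (k - 1) x) p (-1) 1 ≠ 0 := by
    rw [LpOn_jacobi_mul_truncPow_eq (by linarith [hε.2])]
    exact ((ENNReal.ofReal_pos.2 (by positivity)).trans_le (hlower_p ε hε)).ne'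
  have hN_top := ((hupper ε hε).trans_lt ENNReal.ofReal_lt_top).ne
  have hchain := ((hlower_q ε hε).trans hmodulus).trans
    ((omegaDT_le_LpOn_mul_iSup (measurable_truncPow _ _) (kMonotoneOn_truncPow hk _) hN_pos hN_top
      δ q).trans (mul_le_mul_left (hupper ε hε) _))
  have hquot : cq / C * ε ^ (1 / q.toReal - 1 / p.toReal) =
      cq * ε ^ (β + (k - 1 : ℕ) + 1 / q.toReal) / (C * ε ^ (β + (k - 1 : ℕ) + 1 / p.toReal)) := by
    rw [mul_div_mul_comm, ← Real.rpow_sub hε0]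
    ring_nf
  rw [hquot, ENNReal.ofReal_div_of_pos (by positivity)]
  exact ENNReal.div_le_of_le_mul' hchain

lemma mul_sq_rpow {a δ : ℝ} (ha : 0 ≤ a) (hδ : 0 ≤ δ) (s : ℝ) :
    (a * δ ^ 2) ^ s = a ^ s * δ ^ (2 * s) := by
  rw [Real.mul_rpow ha (sq_nonneg δ), Real.rpow_mul hδ, Real.rpow_two]

lemma exists_le_iSup_omegaDT {k : ℕ} (hk : k ≠ 0) {q p : ℝ≥0∞} (hq : q ≠ 0) (hp : p ≠ 0) (α : ℝ)
    {β : ℝ} (hβ : β ∈ Jset p) {δ₀ : ℝ} (hkδ₀ : (k : ℝ) ^ 2 * (k + 1) * δ₀ ^ 2 ≤ 1) :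
    ∃ c > (0 : ℝ), ∀ δ : ℝ, 0 < δ → δ ≤ δ₀ →
      ENNReal.ofReal (c * δ ^ (2 / q.toReal - 2 / p.toReal)) ≤
        ⨆ f ∈ BSet p α β ∩ MSet k, omegaDT k f δ (jacobi α β) q := by
  obtain ⟨c, hc, hle⟩ := exists_rpow_le_iSup_omegaDT hk hq hp α hβ
  refine ⟨c * (2 * k ^ 2) ^ (1 / q.toReal - 1 / p.toReal), by positivity, fun δ hδ hδδ₀ => ?_⟩
  refine le_trans (le_of_eq ?_) (hle δ hδ (le_trans (by gcongr) hkδ₀))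
  rw [mul_sq_rpow (by positivity) hδ.le]
  ring_nf

/-! ### Pointwise growth -/

lemma abs_prod_mul_dividedDiff_insert_sub_le {f : ℝ → ℝ} {s : Finset ℝ} {y τ M B : ℝ}
    (hτ : 0 < τ) (hys : y ∉ s)
    (hsep : (insert y (s : Set ℝ)).Pairwise fun x z => τ ≤ |x - z|)
    (hB : ∀ x ∈ s, |y - x| ≤ B * τ) (hM : ∀ x ∈ s, |f x| ≤ M) :
    |(∏ x ∈ s, (y - x)) * dividedDiff (insert y s) f - f y| ≤ s.card * M * B ^ s.card := by
  have hweight : (∏ x ∈ s, (y - x)) * Lagrange.nodalWeight (insert y s) id y = 1 := by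
    rw [Lagrange.nodalWeight, Finset.erase_insert hys, Finset.prod_inv_distrib]
    exact mul_inv_cancel₀ (Finset.prod_ne_zero_iff.2 fun x hx =>
      sub_ne_zero.2 (ne_of_mem_of_not_mem hx hys).symm)
  have hprod : |∏ x ∈ s, (y - x)| ≤ (B * τ) ^ s.card := by
    rw [Finset.abs_prod, ← Finset.prod_const]
    exact Finset.prod_le_prod (fun _ _ => abs_nonneg _) hB
  have hterm : ∀ x ∈ s, |Lagrange.nodalWeight (insert y s) id x * f x| ≤ M * τ⁻¹ ^ s.card := by
    intro x hx
    have hx' := abs_nodalWeight_le hτ (s := insert y s) (by rwa [Finset.coe_insert])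
      (Finset.mem_insert_of_mem hx)
    rw [Finset.card_insert_of_notMem hys, Nat.add_sub_cancel] at hx'
    rw [abs_mul, mul_comm]
    exact mul_le_mul (hM x hx) hx' (abs_nonneg _) ((abs_nonneg _).trans (hM x hx))
  have hsum : |∑ x ∈ s, Lagrange.nodalWeight (insert y s) id x * f x| ≤
      s.card * (M * τ⁻¹ ^ s.card) := by
    rw [← nsmul_eq_mul]
    exact (Finset.abs_sum_le_sum_abs _ _).trans (Finset.sum_le_card_nsmul _ _ _ hterm)
  rw [dividedDiff_apply, Finset.sum_insert hys, mul_add, ← mul_assoc, hweight, one_mul,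
    add_sub_cancel_left, abs_mul]
  calc _ ≤ (B * τ) ^ s.card * (s.card * (M * τ⁻¹ ^ s.card)) :=
        mul_le_mul hprod hsum (abs_nonneg _) ((abs_nonneg _).trans hprod)
    _ = s.card * M * B ^ s.card := by
      rw [mul_pow, inv_pow]
      field_simp

lemma pairwise_le_abs_sub_insert {s : Set ℝ} {τ x : ℝ}
    (hs : s.Pairwise fun x z => τ ≤ |x - z|) (hx : ∀ z ∈ s, τ ≤ |x - z|) :
    (insert x s).Pairwise fun x z => τ ≤ |x - z| := by
  have : Std.Symm fun x z : ℝ => τ ≤ |x - z| := ⟨fun u v huv => by rwa [abs_sub_comm]⟩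
  exact hs.insert_of_symm fun z hz _ => hx z hz

lemma kMonotoneOn.exists_nonneg_abs_prod_mul_sub_le {k : ℕ} {f : ℝ → ℝ} (hf : kMonotoneOn k f)
    {s : Finset ℝ} {y τ M B : ℝ} (hcard : s.card = k) (hy : y ∈ Ioo (-1) 1)
    (hsI : ↑s ⊆ Ioo (-1 : ℝ) 1) (hτ : 0 < τ) (hsep : (s : Set ℝ).Pairwise fun x z => τ ≤ |x - z|)
    (hys : ∀ x ∈ s, τ ≤ |y - x|) (hB : ∀ x ∈ s, |y - x| ≤ B * τ) (hM : ∀ x ∈ s, |f x| ≤ M) :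
    ∃ d ≥ 0, |(∏ x ∈ s, (y - x)) * d - f y| ≤ k * M * B ^ k := by
  have hnotMem : y ∉ s := fun h => by
    have := hys y h
    rw [sub_self, abs_zero] at this
    exact this.not_gt hτ
  refine ⟨dividedDiff (insert y s) f, ?_, hcard ▸ abs_prod_mul_dividedDiff_insert_sub_le hτ hnotMem
    (pairwise_le_abs_sub_insert hsep hys) hB hM⟩
  refine kMonotoneOn_iff_dividedDiff_nonneg.1 hf _
    (by rw [Finset.card_insert_of_notMem hnotMem, hcard]) ?_
  rw [Finset.coe_insert, insert_subset_iff]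
  exact ⟨hy, hsI⟩

lemma exists_finset_pairwise_le_abs_sub {P : ℝ → Prop} {a τ : ℝ} (hτ : 0 < τ) (n : ℕ)
    (hP : ∀ i < n, ∃ x ∈ Icc (a + 2 * i * τ) (a + 2 * i * τ + τ), P x) :
    ∃ s : Finset ℝ, s.card = n ∧ (∀ x ∈ s, P x) ∧ ↑s ⊆ Icc a (a + 2 * n * τ - τ) ∧
      (s : Set ℝ).Pairwise fun x z => τ ≤ |x - z| := by
  induction n with
  | zero => exact ⟨∅, by simp⟩
  | succ n ih =>
    obtain ⟨s, hcard, hs, hsub, hsep⟩ := ih fun i hi => hP i (by omega)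
    obtain ⟨x, hx, hPx⟩ := hP n n.lt_succ_self
    have hsx : ∀ z ∈ s, z + τ ≤ x := fun z hz => by linarith [(hsub hz).2, hx.1]
    have hxs : x ∉ s := fun h => by linarith [hsx x h]
    refine ⟨insert x s, by rw [Finset.card_insert_of_notMem hxs, hcard],
      (Finset.forall_mem_insert ..).2 ⟨hPx, hs⟩, ?_, ?_⟩
    · rw [Finset.coe_insert, insert_subset_iff]
      push_cast
      have hnτ : 0 ≤ n * τ := by positivity
      exact ⟨⟨by linarith [hx.1], by linarith [hx.2]⟩,
        hsub.trans (Icc_subset_Icc_right (by linarith))⟩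
    · rw [Finset.coe_insert]
      exact pairwise_le_abs_sub_insert hsep fun z hz =>
        le_abs.2 (.inl (by linarith [hsx z hz]))

section PointwiseBound

variable {k : ℕ} {f : ℝ → ℝ} {y τ M : ℝ}

lemma kMonotoneOn.neg_le_of_forall_exists_abs_le (hf : kMonotoneOn k f) (hτ : 0 < τ)
    (hl : -1 < y - 4 * k * τ) (hr : y < 1)
    (hsmall : ∀ c ∈ Icc (y - 4 * k * τ) (y + τ), ∃ x ∈ Icc c (c + τ), |f x| ≤ M) :
    -(k * M * (4 * k) ^ k) ≤ f y := by
  have hmul : ∀ i < k, (i : ℝ) * τ ≤ k * τ := fun i hi => by gcongr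
  have hkτ : 0 ≤ k * τ := by positivity
  obtain ⟨s, hcard, hs, hsub, hsep⟩ := exists_finset_pairwise_le_abs_sub (P := fun x => |f x| ≤ M)
    (a := y - 4 * k * τ) hτ k fun i hi => hsmall _
      ⟨by linarith [show 0 ≤ i * τ by positivity], by linarith [hmul i hi]⟩
  have hsy : ∀ x ∈ s, x + τ ≤ y := fun x hx => by linarith [(hsub hx).2]
  obtain ⟨d, hd, hbound⟩ := hf.exists_nonneg_abs_prod_mul_sub_le (B := 4 * k) hcard
    ⟨by linarith, hr⟩ (fun x hx => ⟨by linarith [(hsub hx).1], by linarith [hsy x hx]⟩) hτ hsep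
    (fun x hx => le_abs.2 (.inl (by linarith [hsy x hx])))
    (fun x hx => by rw [abs_of_nonneg] <;> linarith [(hsub hx).1, hsy x hx]) hs
  have hprod : 0 ≤ ∏ x ∈ s, (y - x) := Finset.prod_nonneg fun x hx => by linarith [hsy x hx]
  linarith [(abs_le.1 hbound).2, mul_nonneg hprod hd]

lemma kMonotoneOn.le_of_forall_exists_abs_le (hk : k ≠ 0) (hf : kMonotoneOn k f) (hτ : 0 < τ)
    (hl : -1 < y - 4 * k * τ) (hr : y + 2 * τ < 1)
    (hsmall : ∀ c ∈ Icc (y - 4 * k * τ) (y + τ), ∃ x ∈ Icc c (c + τ), |f x| ≤ M) :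
    f y ≤ k * M * (4 * k) ^ k := by
  obtain ⟨m, rfl⟩ := Nat.exists_eq_add_one_of_ne_zero hk
  push_cast at hl hsmall
  have hmul : ∀ i < m, (i : ℝ) * τ ≤ m * τ := fun i hi => by gcongr
  have hmτ : 0 ≤ m * τ := by positivity
  obtain ⟨s, hcard, hs, hsub, hsep⟩ := exists_finset_pairwise_le_abs_sub (P := fun x => |f x| ≤ M)
    (a := y - 4 * (m + 1) * τ) hτ m fun i hi => hsmall _
      ⟨by linarith [show 0 ≤ i * τ by positivity], by linarith [hmul i hi]⟩
  obtain ⟨w, hw, hfw⟩ := hsmall (y + τ) ⟨by linarith, le_rfl⟩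
  have hsy : ∀ x ∈ s, x + τ ≤ y := fun x hx => by linarith [(hsub hx).2]
  have hws : w ∉ s := fun h => by linarith [hsy w h, hw.1]
  obtain ⟨d, hd, hbound⟩ := hf.exists_nonneg_abs_prod_mul_sub_le (s := insert w s) (y := y)
    (τ := τ) (M := M) (B := 4 * (m + 1 : ℕ)) (by rw [Finset.card_insert_of_notMem hws, hcard])
    ⟨by linarith, by linarith⟩
    (by
      rw [Finset.coe_insert, insert_subset_iff]
      exact ⟨⟨by linarith [hw.1], by linarith [hw.2]⟩,
        fun x hx => ⟨by linarith [(hsub hx).1], by linarith [hsy x hx]⟩⟩)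
    hτ
    (by
      rw [Finset.coe_insert]
      exact pairwise_le_abs_sub_insert hsep fun x hx =>
        le_abs.2 (.inl (by linarith [hsy x hx, hw.1])))
    ((Finset.forall_mem_insert ..).2 ⟨le_abs.2 (.inr (by linarith [hw.1])),
      fun x hx => le_abs.2 (.inl (by linarith [hsy x hx]))⟩)
    ((Finset.forall_mem_insert ..).2
      ⟨by push_cast; rw [abs_of_nonpos] <;> linarith [hw.1, hw.2],
        fun x hx => by push_cast; rw [abs_of_nonneg] <;> linarith [(hsub hx).1, hsy x hx]⟩)
    ((Finset.forall_mem_insert ..).2 ⟨hfw, hs⟩)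
  have hprod : ∏ x ∈ insert w s, (y - x) ≤ 0 := by
    rw [Finset.prod_insert hws]
    exact mul_nonpos_of_nonpos_of_nonneg (by linarith [hw.1])
      (Finset.prod_nonneg fun x hx => by linarith [hsy x hx])
  linarith [(abs_le.1 hbound).1, mul_nonpos_of_nonpos_of_nonneg hprod hd]

end PointwiseBound

lemma exists_mem_Icc_abs_le_of_LpOn_eq_one {g : ℝ → ℝ} {p : ℝ≥0∞} (hp : p ≠ 0) {a b a' b' : ℝ}
    (hg : LpOn g p a b = 1) (ha : a ≤ a') (hab : a' < b') (hb : b' ≤ b) :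
    ∃ x ∈ Icc a' b', |g x| ≤ 2 * (b' - a') ^ (-(1 / p.toReal)) := by
  by_contra! hcon
  have hpos : 0 < b' - a' := sub_pos.2 hab
  have hle := ofReal_mul_rpow_le_LpOn hp ha hab hb
    (c := 2 * (b' - a') ^ (-(1 / p.toReal))) (by positivity) fun x hx => (hcon x hx).le
  rw [hg, mul_assoc, ← Real.rpow_add hpos, neg_add_cancel, Real.rpow_zero, mul_one,
    ← ENNReal.ofReal_one, ENNReal.ofReal_le_ofReal_iff zero_le_one] at hle
  norm_num at hle

lemma exists_abs_le_mul_jacobi_of_LpOn_eq_one {f : ℝ → ℝ} {p : ℝ≥0∞} (hp : p ≠ 0) {α β c τ y : ℝ}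
    (hf : LpOn (fun x => jacobi α β x * f x) p (-1) 1 = 1) (hτ : 0 < τ)
    (hyl : 1 + y ≤ 2 * (1 + c)) (hyr : c + τ - y ≤ (1 - y) / 2)
    (hcy : c + τ ≤ y + (1 + y)) (hcr : y - c ≤ 1 - y) (hy : y ∈ Ioo (-1 : ℝ) 1) :
    ∃ x ∈ Icc c (c + τ),
      |f x| ≤ 2 ^ |-α| * 2 ^ |-β| * (2 * τ ^ (-(1 / p.toReal))) * jacobi (-α) (-β) y := by
  obtain ⟨x, hx, hfx⟩ := exists_mem_Icc_abs_le_of_LpOn_eq_one hp hf (a' := c) (b' := c + τ)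
    (by linarith [hy.1]) (by linarith) (by linarith [hy.2])
  refine ⟨x, hx, ?_⟩
  have hxI : x ∈ Ioo (-1 : ℝ) 1 := ⟨by linarith [hy.1, hx.1], by linarith [hy.2, hx.2]⟩
  have hw : jacobi (-α) (-β) x ≤ 2 ^ |-α| * 2 ^ |-β| * jacobi (-α) (-β) y :=
    jacobi_le_mul_jacobi hxI hy (by linarith [hx.2]) (by linarith [hx.1]) (by linarith [hx.1])
      (by linarith [hx.2]) _ _
  have hcancel : jacobi (-α) (-β) x * jacobi α β x = 1 := by
    rw [jacobi_mul_jacobi hxI, neg_add_cancel, neg_add_cancel, jacobi, Real.rpow_zero,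
      Real.rpow_zero, one_mul]
  rw [add_sub_cancel_left, abs_mul, abs_of_pos (jacobi_pos hxI α β)] at hfx
  calc |f x| = jacobi (-α) (-β) x * (jacobi α β x * |f x|) := by
        rw [← mul_assoc, hcancel, one_mul]
    _ ≤ 2 ^ |-α| * 2 ^ |-β| * jacobi (-α) (-β) y * (2 * τ ^ (-(1 / p.toReal))) :=
        mul_le_mul hw hfx (mul_nonneg (jacobi_pos hxI α β).le (abs_nonneg _))
          ((jacobi_pos hxI _ _).le.trans hw)
    _ = _ := by ring

lemma exists_abs_le_mul_jacobi {k : ℕ} (hk : k ≠ 0) {p : ℝ≥0∞} (hp : p ≠ 0) (α β : ℝ) :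
    ∃ C > 0, ∀ f ∈ BSet p α β ∩ MSet k, ∀ y ∈ Ioo (-1 : ℝ) 1,
      |f y| ≤ C * jacobi (-α - 1 / p.toReal) (-β - 1 / p.toReal) y := by
  set e := 1 / p.toReal with he
  have hk1 : (1 : ℝ) ≤ k := by exact_mod_cast Nat.one_le_iff_ne_zero.2 hk
  refine ⟨k * (2 ^ |-α| * 2 ^ |-β| * (2 * (16 * k) ^ e)) * (4 * k) ^ k, by positivity, ?_⟩
  rintro f ⟨⟨-, hB⟩, hf⟩ y hy
  have hy1 : 0 < 1 + y := by linarith [hy.1]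
  have hy2 : 0 < 1 - y := by linarith [hy.2]
  set τ := (1 + y) * (1 - y) / (16 * k) with hτdef
  have hτ : 0 < τ := by positivity
  have hkτ : 4 * k * τ = (1 + y) * (1 - y) / 4 := by rw [hτdef]; field_simp; norm_num
  have hτk : τ ≤ k * τ := le_mul_of_one_le_left hτ.le hk1
  have hl : 4 * k * τ ≤ (1 + y) / 2 := by nlinarith
  have hr : 4 * k * τ ≤ (1 - y) / 2 := by nlinarith
  have hsmall := fun c (hc : c ∈ Icc (y - 4 * k * τ) (y + τ)) =>
    exists_abs_le_mul_jacobi_of_LpOn_eq_one hp hB hτ (y := y) (c := c) (by linarith [hc.1])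
      (by linarith [hc.2]) (by linarith [hc.2]) (by linarith [hc.1]) hy
  have hτe : τ ^ (-e) * jacobi (-α) (-β) y = (16 * k) ^ e * jacobi (-α - e) (-β - e) y := by
    rw [sub_eq_add_neg, sub_eq_add_neg, ← jacobi_mul_jacobi hy, jacobi, jacobi, hτdef,
      Real.div_rpow (by positivity) (by positivity), Real.mul_rpow hy1.le hy2.le,
      Real.rpow_neg (by positivity : (0 : ℝ) ≤ 16 * k), div_inv_eq_mul]
    ring
  have hlower := hf.neg_le_of_forall_exists_abs_le hτ (by linarith) (by linarith) hsmall
  have hupper := hf.le_of_forall_exists_abs_le hk hτ (by linarith) (by linarith) hsmall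
  refine (abs_le.2 ⟨hlower, hupper⟩).trans_eq ?_
  rw [← he]
  linear_combination k * (2 ^ |-α| * 2 ^ |-β| * 2) * (4 * k) ^ k * hτe

/-! ### Local estimate of `k`th differences -/

lemma fwdDiff_iter_eq_sum (f : ℝ → ℝ) (n : ℕ) (s a : ℝ) :
    (fwdDiff s)^[n] f a =
      ∑ i ∈ Finset.range (n + 1), (n.choose i : ℝ) * (-1 : ℝ) ^ (n - i) * f (a + i * s) := by
  rw [fwdDiff_iter_eq_sum_shift]
  refine Finset.sum_congr rfl fun i _ => ?_
  simp only [zsmul_eq_mul, nsmul_eq_mul]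
  push_cast
  ring

lemma symmDelta_eq_fwdDiff_iter {k : ℕ} {s x : ℝ} (f : ℝ → ℝ)
    (hl : x - k * s / 2 ∈ Icc (-1 : ℝ) 1) (hr : x + k * s / 2 ∈ Icc (-1 : ℝ) 1) :
    symmDelta k s f x = (fwdDiff s)^[k] f (x - k * s / 2) := by
  rw [fwdDiff_iter_eq_sum, symmDelta, if_pos ⟨hl, hr⟩]

lemma measurable_dividedDiff_arithNodes {f : ℝ → ℝ} (hf : Measurable f) {s : ℝ} (hs : 0 < s)
    (n : ℕ) : Measurable fun a => dividedDiff (arithNodes a s (n + 1)) f := by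
  have hfwd : Measurable ((fwdDiff s)^[n] f) := by
    rw [funext fun a => fwdDiff_iter_eq_sum f n s a]
    fun_prop
  convert hfwd.const_mul (n.factorial * s ^ n : ℝ)⁻¹ with a
  rw [fwdDiff_iter_eq_dividedDiff f hs, inv_mul_cancel_left₀ (by positivity)]

section LocalEstimate

variable {k : ℕ} {f : ℝ → ℝ} {s S x : ℝ}

lemma kMonotoneOn.fwdDiff_iter_nonneg (hf : kMonotoneOn k f) (hs : 0 < s) (hl : -1 < x)
    (hr : x + k * s < 1) : 0 ≤ (fwdDiff s)^[k] f x := by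
  rw [fwdDiff_iter_eq_dividedDiff f hs]
  refine mul_nonneg (by positivity) (kMonotoneOn_iff_dividedDiff_nonneg.1 hf _
    (card_arithNodes _ hs.ne' _) ((arithNodes_subset_Icc hs.le).trans fun y hy => ?_))
  push_cast at hy
  exact ⟨hl.trans_le hy.1, by linarith [hy.2]⟩

lemma kMonotoneOn.fwdDiff_iter_le (hk : k ≠ 0) (hf : kMonotoneOn k f) (hs : 0 < s) (hsS : s ≤ S)
    (hl : -1 < x - 2 * k * S) (hr : x + 2 * k * S < 1) :
    (fwdDiff s)^[k] f (x - k * s / 2) ≤ (k - 1).factorial * S ^ (k - 1) *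
      (dividedDiff (arithNodes (x + k * S) S k) f -
        dividedDiff (arithNodes (x - 2 * k * S) S k) f) := by
  have hS : 0 < S := hs.trans_le hsS
  have hk1 : (1 : ℝ) ≤ k := by exact_mod_cast Nat.one_le_iff_ne_zero.2 hk
  have hksS : k * s ≤ k * S := by gcongr
  have hks : s ≤ k * s := le_mul_of_one_le_left hs.le hk1
  have hkS : S ≤ k * S := le_mul_of_one_le_left hS.le hk1
  have hfwd : (fwdDiff s)^[k] f (x - k * s / 2) = (k - 1).factorial * s ^ (k - 1) *
      (dividedDiff (arithNodes (x - k * s / 2 + s) s k) f -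
        dividedDiff (arithNodes (x - k * s / 2) s k) f) := by
    obtain ⟨n, rfl⟩ := Nat.exists_eq_add_one_of_ne_zero hk
    rw [Function.iterate_succ_apply', fwdDiff, fwdDiff_iter_eq_dividedDiff f hs,
      fwdDiff_iter_eq_dividedDiff f hs, Nat.add_sub_cancel]
    ring
  have hright : dividedDiff (arithNodes (x - k * s / 2 + s) s k) f ≤
      dividedDiff (arithNodes (x + k * S) S k) f :=
    hf.dividedDiff_arithNodes_le hs hS (by linarith) (by linarith) (by linarith)
  have hleft : dividedDiff (arithNodes (x - 2 * k * S) S k) f ≤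
      dividedDiff (arithNodes (x - k * s / 2) s k) f :=
    hf.dividedDiff_arithNodes_le hS hs (by linarith) (by linarith) (by linarith)
  have hmid : dividedDiff (arithNodes (x - 2 * k * S) S k) f ≤
      dividedDiff (arithNodes (x + k * S) S k) f :=
    hf.dividedDiff_arithNodes_le hS hS (by linarith) (by linarith) (by linarith)
  rw [hfwd]
  exact mul_le_mul_of_nonneg (by gcongr) (sub_le_sub hright hleft) (by positivity)
    (sub_nonneg.2 hmid)

lemma kMonotoneOn.symmDelta_mem_Icc (hk : k ≠ 0) (hf : kMonotoneOn k f) (hs : 0 < s) (hsS : s ≤ S)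
    (hl : -1 < x - 2 * k * S) (hr : x + 2 * k * S < 1) :
    symmDelta k s f x ∈ Icc 0 ((k - 1).factorial * S ^ (k - 1) *
      (dividedDiff (arithNodes (x + k * S) S k) f -
        dividedDiff (arithNodes (x - 2 * k * S) S k) f)) := by
  have hks0 : 0 ≤ k * s := by positivity
  have hks : k * s ≤ k * S := by gcongr
  rw [symmDelta_eq_fwdDiff_iter f ⟨by linarith, by linarith⟩ ⟨by linarith, by linarith⟩]
  exact ⟨hf.fwdDiff_iter_nonneg hs (by linarith) (by linarith), hf.fwdDiff_iter_le hk hs hsS hl hr⟩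

lemma kMonotoneOn.abs_dividedDiff_arithNodes_le_of_forall_abs_le (hk : k ≠ 0)
    (hf : kMonotoneOn k f) {a b ρ M : ℝ} (hρ : 0 < ρ) (hS : 0 < S) (ha : -1 < a - ρ)
    (hb : b + ρ < 1) (hM : ∀ y ∈ Icc (a - ρ) (b + ρ), |f y| ≤ M) (hax : a ≤ x)
    (hxb : x + (k - 1) * S ≤ b) :
    |dividedDiff (arithNodes x S k) f| ≤ k * (M * (k / ρ) ^ (k - 1)) := by
  have hk1 : (1 : ℝ) ≤ k := by exact_mod_cast Nat.one_le_iff_ne_zero.2 hk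
  have hkS : 0 ≤ (k - 1) * S := mul_nonneg (sub_nonneg.2 hk1) hS.le
  have hτ : 0 < ρ / k := by positivity
  have hkτ : (k - 1) * (ρ / k) = ρ - ρ / k := by field_simp
  have hbound : ∀ z, a - ρ ≤ z → z ≤ b + ρ / k →
      |dividedDiff (arithNodes z (ρ / k) k) f| ≤ k * (M * (k / ρ) ^ (k - 1)) := fun z hz hz' => by
    rw [← inv_div ρ]
    exact abs_dividedDiff_arithNodes_le hτ fun y hy => hM y ⟨hz.trans hy.1, by linarith [hy.2]⟩
  rw [abs_le]
  constructor
  · exact (abs_le.1 (hbound (a - ρ) le_rfl (by linarith))).1.trans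
      (hf.dividedDiff_arithNodes_le hτ hS ha (by linarith) (by linarith))
  · exact (hf.dividedDiff_arithNodes_le hS hτ (by linarith) (by linarith) (by linarith)).trans
      (abs_le.1 (hbound (b + ρ / k) (by linarith) le_rfl)).2

end LocalEstimate

section Increment

variable {G : ℝ → ℝ} {a b c d D : ℝ}

lemma integral_increment_le (hG : Measurable G) (hab : a ≤ b) (hc : 0 ≤ c) (hd : 0 ≤ d)
    (hD : ∀ y ∈ Icc (a - d) (b + c), |G y| ≤ D) :
    IntervalIntegrable (fun x => G (x + c) - G (x - d)) volume a b ∧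
      ∫ x in a..b, (G (x + c) - G (x - d)) ≤ 2 * (c + d) * D := by
  have hGint : IntegrableOn G (Icc (a - d) (b + c)) :=
    .of_bound measure_Icc_lt_top hG.aestronglyMeasurable D
      ((ae_restrict_iff' measurableSet_Icc).2 (.of_forall hD))
  have hint : ∀ u ∈ Icc (a - d) (b + c), ∀ v ∈ Icc (a - d) (b + c),
      IntervalIntegrable G volume u v := fun u hu v hv =>
    (hGint.mono_set (uIcc_subset_Icc hu hv)).intervalIntegrable
  have hac : a + c ∈ Icc (a - d) (b + c) := ⟨by linarith, by linarith⟩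
  have hbc : b + c ∈ Icc (a - d) (b + c) := ⟨by linarith, le_rfl⟩
  have had : a - d ∈ Icc (a - d) (b + c) := ⟨le_rfl, by linarith⟩
  have hbd : b - d ∈ Icc (a - d) (b + c) := ⟨by linarith, by linarith⟩
  have hplus : IntervalIntegrable (fun x => G (x + c)) volume a b := by
    simpa using (hint _ hac _ hbc).comp_add_right c
  have hminus : IntervalIntegrable (fun x => G (x - d)) volume a b := by
    simpa using (hint _ had _ hbd).comp_sub_right d
  have hbound : ∀ t, t - d ∈ Icc (a - d) (b + c) → t + c ∈ Icc (a - d) (b + c) →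
      |∫ x in (t - d)..(t + c), G x| ≤ D * (c + d) := fun t ht ht' => by
    have hle := intervalIntegral.norm_integral_le_of_norm_le_const (f := G) (C := D)
      fun y hy => hD y (uIcc_subset_Icc ht ht' (uIoc_subset_uIcc hy))
    rwa [Real.norm_eq_abs, add_sub_sub_cancel, abs_of_nonneg (add_nonneg hc hd)] at hle
  refine ⟨hplus.sub hminus, ?_⟩
  rw [intervalIntegral.integral_sub hplus hminus, intervalIntegral.integral_comp_add_right,
    intervalIntegral.integral_comp_sub_right, intervalIntegral.integral_interval_sub_interval_comm'
      (hint _ hac _ hbc) (hint _ had _ hbd) (hint _ hac _ had)]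
  linarith [(abs_le.1 (hbound b hbd hbc)).2, (abs_le.1 (hbound a had hac)).1]

lemma setLIntegral_enorm_rpow_le_of_le_increment (hG : Measurable G) (hab : a ≤ b) (hc : 0 ≤ c)
    (hd : 0 ≤ d) (hD : ∀ y ∈ Icc (a - d) (b + c), |G y| ≤ D) {g : ℝ → ℝ} {L r : ℝ} (hL : 0 < L)
    (hr : 1 ≤ r) (hg : ∀ x ∈ Icc a b, g x ∈ Icc 0 (L * (G (x + c) - G (x - d)))) :
    ∫⁻ x in Icc a b, ‖g x‖ₑ ^ r ≤ ENNReal.ofReal ((L * (2 * D)) ^ r * (c + d)) := by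
  have hD0 : 0 ≤ D := (abs_nonneg _).trans (hD a ⟨by linarith, by linarith⟩)
  set X := L * (2 * D) with hX
  have hX0 : 0 ≤ X := by positivity
  have hpow : ∀ z : ℝ, 0 ≤ z → z ^ r = z ^ (r - 1) * z := fun z hz => by
    rw [← Real.rpow_add_one' hz (by linarith), sub_add_cancel]
  have hgX : ∀ x ∈ Icc a b, g x ≤ X := fun x hx => (hg x hx).2.trans <| by
    rw [hX]
    gcongr
    linarith [(abs_le.1 (hD (x + c) ⟨by linarith [hx.1], by linarith [hx.2]⟩)).2,
      (abs_le.1 (hD (x - d) ⟨by linarith [hx.1], by linarith [hx.2]⟩)).1]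
  obtain ⟨hint, hle⟩ := integral_increment_le hG hab hc hd hD
  calc ∫⁻ x in Icc a b, ‖g x‖ₑ ^ r
      ≤ ∫⁻ x in Icc a b, ENNReal.ofReal (X ^ (r - 1) * L) *
          ENNReal.ofReal (G (x + c) - G (x - d)) := by
        refine setLIntegral_mono' measurableSet_Icc fun x hx => ?_
        obtain ⟨hg0, hg1⟩ := hg x hx
        rw [Real.enorm_eq_ofReal hg0, ENNReal.ofReal_rpow_of_nonneg hg0 (by linarith),
          ← ENNReal.ofReal_mul (by positivity), hpow _ hg0, mul_assoc]
        exact ENNReal.ofReal_le_ofReal (mul_le_mul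
          (Real.rpow_le_rpow hg0 (hgX x hx) (by linarith)) hg1 hg0 (by positivity))
    _ = ENNReal.ofReal (X ^ (r - 1) * L) *
          ENNReal.ofReal (∫ x in a..b, (G (x + c) - G (x - d))) := by
        rw [lintegral_const_mul' _ _ ENNReal.ofReal_ne_top, intervalIntegral.integral_of_le hab,
          ← integral_Icc_eq_integral_Ioc, ofReal_integral_eq_lintegral_ofReal
            ((intervalIntegrable_iff_integrableOn_Icc_of_le hab).1 hint)
            ((ae_restrict_iff' measurableSet_Icc).2 (.of_forall fun x hx =>
              nonneg_of_mul_nonneg_right ((hg x hx).1.trans (hg x hx).2) hL))]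
    _ ≤ ENNReal.ofReal (X ^ (r - 1) * L * (2 * (c + d) * D)) := by
        rw [← ENNReal.ofReal_mul (by positivity)]
        gcongr
    _ = ENNReal.ofReal (X ^ r * (c + d)) := by
        rw [hpow X hX0]
        congr 1
        rw [hX]
        ring

end Increment

lemma kMonotoneOn.setLIntegral_symmDelta_le {k : ℕ} (hk : k ≠ 0) {f : ℝ → ℝ} (hf : kMonotoneOn k f)
    (hfm : Measurable f) {a b ρ S M r : ℝ} (hr : 1 ≤ r) (hS : 0 < S) (hSρ : 2 * k * S ≤ ρ)
    (hab : a ≤ b) (ha : -1 < a - 2 * ρ) (hb : b + 2 * ρ < 1)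
    (hM : ∀ x ∈ Icc (a - 2 * ρ) (b + 2 * ρ), |f x| ≤ M) {s : ℝ → ℝ}
    (hs : ∀ x ∈ Icc a b, s x ∈ Ioc 0 S) :
    ∫⁻ x in Icc a b, ‖symmDelta k (s x) f x‖ₑ ^ r ≤ ENNReal.ofReal
      (3 * k * ((k - 1).factorial * (2 * k ^ k)) ^ r *
        (M ^ r * ρ * (S / ρ) ^ ((k - 1 : ℕ) * r + 1))) := by
  have hkS : 0 < k * S := by positivity
  have hρ : 0 < ρ := by linarith
  have hM0 : 0 ≤ M := (abs_nonneg _).trans (hM a ⟨by linarith, by linarith⟩)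
  have hG : Measurable fun y => dividedDiff (arithNodes y S k) f := by
    obtain ⟨n, rfl⟩ := Nat.exists_eq_add_one_of_ne_zero hk
    exact measurable_dividedDiff_arithNodes hfm hS n
  have hbase : (k - 1).factorial * S ^ (k - 1) * (2 * (k * (M * (k / ρ) ^ (k - 1)))) =
      (k - 1).factorial * (2 * k ^ k) * (M * (S / ρ) ^ (k - 1)) := by
    rw [div_pow, div_pow, ← mul_pow_sub_one hk (k : ℝ)]
    ring
  refine (setLIntegral_enorm_rpow_le_of_le_increment hG hab hkS.le
    (by positivity : 0 ≤ 2 * k * S)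
    (fun y hy => hf.abs_dividedDiff_arithNodes_le_of_forall_abs_le hk hρ hS (a := a - ρ)
      (b := b + ρ) (by linarith) (by linarith)
      (fun x hx => hM x ⟨by linarith [hx.1], by linarith [hx.2]⟩)
      (by linarith [hy.1]) (by linarith [hy.2]))
    (by positivity) hr fun x hx => hf.symmDelta_mem_Icc hk (hs x hx).1 (hs x hx).2
      (by linarith [hx.1]) (by linarith [hx.2])).trans_eq ?_
  rw [hbase, Real.mul_rpow (by positivity) (by positivity),
    Real.mul_rpow hM0 (by positivity), Real.rpow_add_one (by positivity), Real.rpow_mul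
    (by positivity), Real.rpow_natCast]
  congr 1
  field_simp
  ring

/-! ### Endpoint parts -/

/-- The reflection `x ↦ (-1)^k f(-x)`, which preserves `k`-monotonicity and exchanges the roles of
the endpoints `-1` and `1`. -/
noncomputable def signedReflect (k : ℕ) (f : ℝ → ℝ) (x : ℝ) : ℝ := (-1) ^ k * f (-x)

lemma measurable_signedReflect (k : ℕ) {f : ℝ → ℝ} (hf : Measurable f) :
    Measurable (signedReflect k f) :=
  (hf.comp measurable_neg).const_mul _

lemma kMonotoneOn.signedReflect {k : ℕ} {f : ℝ → ℝ} (hf : kMonotoneOn k f) :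
    kMonotoneOn k (signedReflect k f) := by
  intro x hx hmem
  have hprod : ∀ i, ∏ j ∈ Finset.univ.erase i, (-x i - -x j) =
      (-1) ^ k * ∏ j ∈ Finset.univ.erase i, (x i - x j) := fun i => by
    have hcard : (Finset.univ.erase i).card = k := by
      rw [Finset.card_erase_of_mem (Finset.mem_univ i), Finset.card_fin, Nat.add_sub_cancel]
    simp_rw [← hcard, ← Finset.prod_neg, neg_sub_neg, neg_sub]
  refine (hf (fun i => -x i) (neg_injective.comp hx)
    fun i => ⟨neg_lt_neg (hmem i).2, neg_lt.1 (hmem i).1⟩).trans_eq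
      (Finset.sum_congr rfl fun i _ => ?_)
  rw [hprod, _root_.signedReflect, div_mul_eq_div_div, div_eq_mul_inv (f (-x i)), ← inv_pow,
    inv_neg_one, mul_comm (f (-x i))]

lemma symmDelta_neg (k : ℕ) (h : ℝ) (f : ℝ → ℝ) (x : ℝ) :
    symmDelta k h f (-x) = symmDelta k h (signedReflect k f) x := by
  have hiff : (-x - k * h / 2 ∈ Icc (-1 : ℝ) 1 ∧ -x + k * h / 2 ∈ Icc (-1 : ℝ) 1) ↔
      (x - k * h / 2 ∈ Icc (-1 : ℝ) 1 ∧ x + k * h / 2 ∈ Icc (-1 : ℝ) 1) := by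
    simp only [mem_Icc]
    constructor <;> rintro ⟨⟨h1, h2⟩, h3, h4⟩ <;>
      refine ⟨⟨?_, ?_⟩, ?_, ?_⟩ <;> linarith
  refine if_congr hiff ?_ rfl
  rw [← Finset.sum_range_reflect]
  refine Finset.sum_congr rfl fun i hi => ?_
  have hik : i ≤ k := Nat.lt_succ_iff.1 (Finset.mem_range.1 hi)
  have hsign : (-1 : ℝ) ^ i = (-1) ^ (k - i) * (-1) ^ k := by
    rw [← pow_add, show k - i + k = i + 2 * (k - i) by omega, pow_add, pow_mul, neg_one_sq,
      one_pow, mul_one]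
  rw [show k + 1 - 1 - i = k - i by omega, Nat.sub_sub_self hik, Nat.choose_symm hik,
    signedReflect, Nat.cast_sub hik, hsign,
    show -x - k * h / 2 + (k - i) * h = -(x - k * h / 2 + i * h) by ring]
  ring

lemma phiW_neg (x : ℝ) : phiW (-x) = phiW x := by rw [phiW, phiW, neg_sq]

lemma OmegaBwd_eq_OmegaFwd_signedReflect (k : ℕ) (f : ℝ → ℝ) (δ α β : ℝ) (q : ℝ≥0∞) :
    OmegaBwd k f δ (jacobi α β) q = OmegaFwd k (signedReflect k f) δ (jacobi β α) q := by
  refine iSup_congr fun h => iSup_congr fun _ => ?_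
  rw [← LpOn_comp_neg, neg_sub, sub_eq_neg_add]
  congr 1 with x
  rw [jacobi_neg, ← symmDelta_neg, neg_add']

lemma abs_signedReflect_le_mul_jacobi {k : ℕ} {f : ℝ → ℝ} {M α β : ℝ}
    (hf : ∀ y ∈ Ioo (-1 : ℝ) 1, |f y| ≤ M * jacobi α β y) :
    ∀ y ∈ Ioo (-1 : ℝ) 1, |signedReflect k f y| ≤ M * jacobi β α y := fun y hy => by
  rw [signedReflect, abs_mul, abs_pow, abs_neg, abs_one, one_pow, one_mul, ← jacobi_neg]
  exact hf (-y) ⟨neg_lt_neg hy.2, neg_lt.1 hy.1⟩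

lemma abs_symmDelta_le {k : ℕ} {h x B : ℝ} {f : ℝ → ℝ}
    (hB : ∀ i ≤ k, |f (x - k * h / 2 + i * h)| ≤ B) : |symmDelta k h f x| ≤ 2 ^ k * B := by
  have hB0 : 0 ≤ B := (abs_nonneg _).trans (hB 0 k.zero_le)
  rw [symmDelta]
  split_ifs
  · have hchoose : ∑ i ∈ Finset.range (k + 1), (k.choose i : ℝ) = 2 ^ k := by
      exact_mod_cast Nat.sum_range_choose k
    rw [← hchoose, Finset.sum_mul]
    refine (Finset.abs_sum_le_sum_abs _ _).trans (Finset.sum_le_sum fun i hi => ?_)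
    rw [abs_mul, abs_mul, abs_pow, abs_neg, abs_one, one_pow, mul_one, Nat.abs_cast]
    gcongr
    exact hB i (Nat.lt_succ_iff.1 (Finset.mem_range.1 hi))
  · rw [abs_zero]
    positivity

lemma abs_jacobi_mul_symmDelta_fwd_le {k : ℕ} {f : ℝ → ℝ} {M α β α' β' h x c : ℝ}
    (hM : 0 ≤ M) (hα' : α' ≤ 0) (hf : ∀ y ∈ Ioo (-1 : ℝ) 1, |f y| ≤ M * jacobi α' β' y)
    (hh : 0 ≤ h) (hx : -1 < x) (hc : 2 ≤ c) (hcx : 1 ≤ c * (1 - (x + k * h))) :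
    |jacobi α β x * symmDelta k h f (x + k * h / 2)| ≤
      2 ^ k * M * (c ^ |β| * c ^ |β'|) * (1 + x) ^ (α + α') := by
  have hx0 : 0 < 1 + x := by linarith
  have hend : 0 < 1 - (x + k * h) := pos_of_mul_pos_right (one_pos.trans_le hcx) (by linarith)
  have hkh : 0 ≤ k * h := by positivity
  have hx1 : x < 1 := by linarith
  have hweight : jacobi α β x ≤ c ^ |β| * (1 + x) ^ α :=
    jacobi_le_mul_one_add_rpow ⟨hx.le, hx1⟩ (by linarith)
      (hcx.trans (by gcongr; linarith)) α β
  have hdelta : |symmDelta k h f (x + k * h / 2)| ≤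
      2 ^ k * (M * (c ^ |β'| * (1 + x) ^ α')) := by
    refine abs_symmDelta_le fun i hi => ?_
    have hi0 : 0 ≤ i * h := by positivity
    have hik : i * h ≤ k * h := by gcongr
    rw [add_sub_cancel_right]
    refine (hf _ ⟨by linarith, by linarith⟩).trans ?_
    gcongr
    refine (jacobi_le_mul_one_add_rpow (c := c) ⟨by linarith, by linarith⟩ (by linarith)
      (hcx.trans (by gcongr)) α' β').trans ?_
    gcongr ?_ * ?_
    exact Real.rpow_le_rpow_of_nonpos hx0 (by linarith) hα'
  rw [abs_mul, abs_of_pos (jacobi_pos ⟨hx, hx1⟩ α β), Real.rpow_add hx0]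
  calc _ ≤ c ^ |β| * (1 + x) ^ α * (2 ^ k * (M * (c ^ |β'| * (1 + x) ^ α'))) := by
        gcongr
    _ = _ := by ring

lemma abs_jacobi_mul_symmDelta_le {k : ℕ} {f : ℝ → ℝ} {M α β α' β' s x : ℝ} (hM : 0 ≤ M)
    (hf : ∀ y ∈ Ioo (-1 : ℝ) 1, |f y| ≤ M * jacobi α' β' y) (hs : 0 ≤ s)
    (hx : x ∈ Ioo (-1 : ℝ) 1) (hleft : k * s ≤ 1 + x) (hright : k * s ≤ 1 - x) :
    |jacobi α β x * symmDelta k s f x| ≤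
      2 ^ k * M * (2 ^ |α'| * 2 ^ |β'|) * jacobi (α + α') (β + β') x := by
  have hw := jacobi_pos hx α β
  have hdelta : |symmDelta k s f x| ≤
      2 ^ k * (M * (2 ^ |α'| * 2 ^ |β'| * jacobi α' β' x)) := by
    refine abs_symmDelta_le fun i hi => ?_
    have hi0 : 0 ≤ i * s := by positivity
    have hik : i * s ≤ k * s := by gcongr
    have hmem : x - k * s / 2 + i * s ∈ Ioo (-1 : ℝ) 1 :=
      ⟨by linarith [hx.1], by linarith [hx.2]⟩
    refine (hf _ hmem).trans ?_
    gcongr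
    apply jacobi_le_mul_jacobi hmem hx <;> linarith
  rw [abs_mul, abs_of_pos hw, ← jacobi_mul_jacobi hx]
  calc _ ≤ jacobi α β x * (2 ^ k * (M * (2 ^ |α'| * 2 ^ |β'| * jacobi α' β' x))) := by gcongr
    _ = _ := by ring

lemma exists_OmegaFwd_le {k : ℕ} (hk : k ≠ 0) {q : ℝ≥0∞} (hq : q ≠ 0) {M α α' γ δ₀ : ℝ}
    (hM : 0 < M) (hα' : α' ≤ 0) (hγ : α + α' = γ) (hγq : γ ∈ Jset q) (β β' : ℝ)
    (hkδ₀ : (k : ℝ) ^ 2 * (k + 1) * δ₀ ^ 2 < 1) :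
    ∃ C > 0, ∀ f : ℝ → ℝ, (∀ y ∈ Ioo (-1 : ℝ) 1, |f y| ≤ M * jacobi α' β' y) →
      ∀ δ, 0 < δ → δ ≤ δ₀ →
        OmegaFwd k f δ (jacobi α β) q ≤ ENNReal.ofReal (C * δ ^ (2 * (γ + 1 / q.toReal))) := by
  obtain ⟨K, hK, hLp⟩ := exists_LpOn_le_of_le_rpow hq hγq
  set η := 1 - (k : ℝ) ^ 2 * (k + 1) * δ₀ ^ 2
  have hη0 : 0 < η := by linarith
  have hη1 : η ≤ 1 := sub_le_self _ (by positivity)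
  set c := 2 / η
  have hcη : c * η = 2 := div_mul_cancel₀ _ hη0.ne'
  have hc2 : 2 ≤ c := le_div_self zero_le_two hη0 hη1
  set B := 2 ^ k * M * (c ^ |β| * c ^ |β'|)
  have hB0 : 0 < B := by positivity
  refine ⟨K * B * (2 * k ^ 2) ^ (γ + 1 / q.toReal), by positivity, fun f hf δ hδ hδδ₀ =>
    iSup₂_le fun h hh => ?_⟩
  refine (hLp _ (2 * k ^ 2 * δ ^ 2) B (by positivity) hB0.le fun x hx => ?_).trans_eq ?_
  · rw [← hγ]
    refine abs_jacobi_mul_symmDelta_fwd_le hM.le hα' hf hh.1.le hx.1 hc2 ?_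
    have hkh : k * h ≤ k * (2 * k ^ 2 * δ ^ 2) := by gcongr; exact hh.2
    have hκ : (k : ℝ) ^ 2 * (k + 1) * δ ^ 2 ≤ k ^ 2 * (k + 1) * δ₀ ^ 2 := by gcongr
    have hend : η ≤ 1 - (x + k * h) := by linarith [hx.2]
    calc (1 : ℝ) ≤ c * η := by rw [hcη]; exact one_le_two
      _ ≤ c * (1 - (x + k * h)) := by gcongr
  · rw [mul_sq_rpow (by positivity) hδ.le, mul_assoc (K * B)]

/-! ### The main part -/

lemma mul_phiW_le_one_add {a x : ℝ} (hx : 2 * a ^ 2 ≤ 1 + x) : a * phiW x ≤ 1 + x := by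
  have hx0 : 0 ≤ 1 + x := (by positivity : 0 ≤ 2 * a ^ 2).trans hx
  have hsq : a ^ 2 * (1 - x) ≤ 1 + x := by nlinarith [sq_nonneg a]
  calc a * phiW x ≤ |a| * √(1 - x ^ 2) := by
        rw [phiW]
        gcongr
        exact le_abs_self a
    _ = √(a ^ 2 * (1 - x) * (1 + x)) := by
        rw [← Real.sqrt_sq_eq_abs, ← Real.sqrt_mul (sq_nonneg a)]
        ring_nf
    _ ≤ √((1 + x) * (1 + x)) := by gcongr
    _ = 1 + x := Real.sqrt_mul_self hx0

lemma exists_jacobi_le_mul_rpow (α β : ℝ) : ∃ W > 0, ∀ ρ y : ℝ, 0 < ρ →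
    y ∈ Icc (-1 + ρ / 2) (-1 + 3 * ρ) → y ≤ 1 / 2 → jacobi α β y ≤ W * ρ ^ α := by
  refine ⟨2 ^ |β| * 3 ^ |α|, by positivity, fun ρ y hρ hy hy' => ?_⟩
  have hy0 : 0 < 1 + y := by linarith [hy.1]
  rw [mul_assoc]
  refine (jacobi_le_mul_one_add_rpow (c := 2) ⟨by linarith, by linarith⟩ (by linarith)
    (by linarith) α β).trans (mul_le_mul_of_nonneg_left ?_ (by positivity))
  exact rpow_le_rpow_abs_mul_rpow hy0 hρ (by linarith [hy.2]) (by linarith [hy.1]) α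

lemma setLIntegral_enorm_mul_rpow_le {w g : ℝ → ℝ} {s : Set ℝ} {W r : ℝ} (hs : MeasurableSet s)
    (hr : 0 ≤ r) (hW : 0 ≤ W) (hw : ∀ x ∈ s, |w x| ≤ W) :
    ∫⁻ x in s, ‖w x * g x‖ₑ ^ r ≤ ENNReal.ofReal (W ^ r) * ∫⁻ x in s, ‖g x‖ₑ ^ r := by
  rw [← lintegral_const_mul' _ _ ENNReal.ofReal_ne_top]
  refine setLIntegral_mono' hs fun x hx => ?_
  rw [enorm_mul, ENNReal.mul_rpow_of_nonneg _ _ hr, ← ENNReal.ofReal_rpow_of_nonneg hW hr,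
    Real.enorm_eq_ofReal_abs]
  gcongr
  exact hw x hx

lemma mul_phiW_mem_Ioc {h ρ x : ℝ} (hh : 0 < h) (hρ : 0 < ρ)
    (hx : x ∈ Icc (-1 + ρ) (min (-1 + 2 * ρ) 0)) : h * phiW x ∈ Ioc 0 (2 * (h * √ρ)) := by
  obtain ⟨hx1, hx0⟩ := le_min_iff.1 hx.2
  have hφ0 : 0 < phiW x := Real.sqrt_pos.2 (by nlinarith [hx.1])
  have hφ : phiW x ≤ 2 * √ρ := Real.sqrt_le_iff.2 ⟨by positivity, by
    rw [mul_pow, Real.sq_sqrt hρ.le]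
    nlinarith [hx.1]⟩
  exact ⟨mul_pos hh hφ0, by nlinarith⟩

lemma kMonotoneOn.setLIntegral_symmDelta_mul_phiW_le {k : ℕ} (hk : k ≠ 0) {f : ℝ → ℝ}
    (hf : kMonotoneOn k f) (hfm : Measurable f) {B h ρ r : ℝ} (hr : 1 ≤ r) (hh : 0 < h)
    (hhρ : (16 * k * h) ^ 2 ≤ ρ) (hρ1 : ρ ≤ 1)
    (hB : ∀ y ∈ Icc (-1 + ρ / 2) (-1 + 3 * ρ), y ≤ 1 / 2 → |f y| ≤ B) :
    ∫⁻ x in Icc (-1 + ρ) (min (-1 + 2 * ρ) 0), ‖symmDelta k (h * phiW x) f x‖ₑ ^ r ≤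
      ENNReal.ofReal (3 * k * ((k - 1).factorial * (2 * k ^ k)) ^ r *
        (B ^ r * (ρ / 4) * (8 * (h / √ρ)) ^ ((k - 1 : ℕ) * r + 1))) := by
  have hρ : 0 < ρ := hhρ.trans_lt' (by positivity)
  have hb1 := min_le_left (-1 + 2 * ρ) 0
  have hb0 := min_le_right (-1 + 2 * ρ) 0
  have hab : -1 + ρ ≤ min (-1 + 2 * ρ) 0 := le_min (by linarith) (by linarith)
  have hstep : 2 * k * (2 * (h * √ρ)) ≤ ρ / 4 := by
    nlinarith [Real.le_sqrt_of_sq_le hhρ, Real.mul_self_sqrt hρ.le, Real.sqrt_nonneg ρ]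
  have hratio : 2 * (h * √ρ) / (ρ / 4) = 8 * (h / √ρ) := by
    rw [div_eq_mul_inv h, ← Real.sqrt_div_self]
    field_simp
    norm_num
  rw [← hratio]
  exact hf.setLIntegral_symmDelta_le hk hfm hr (by positivity) hstep hab (by linarith)
    (by linarith) (fun y hy => hB y ⟨by linarith [hy.1], by linarith [hy.2]⟩ (by linarith [hy.2]))
    fun x => mul_phiW_mem_Ioc hh hρ

lemma exists_setLIntegral_dyadic_le {k : ℕ} (hk : k ≠ 0) {M α α' γ r : ℝ} (hM : 0 < M)
    (hγ : α + α' = γ) (hr : 1 ≤ r) (β β' : ℝ) :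
    ∃ C > 0, ∀ f, Measurable f → kMonotoneOn k f →
      (∀ y ∈ Ioo (-1 : ℝ) 1, |f y| ≤ M * jacobi α' β' y) →
      ∀ h ρ : ℝ, 0 < h → (16 * k * h) ^ 2 ≤ ρ → ρ ≤ 1 →
        ∫⁻ x in Icc (-1 + ρ) (min (-1 + 2 * ρ) 0),
          ‖jacobi α β x * symmDelta k (h * phiW x) f x‖ₑ ^ r ≤
        ENNReal.ofReal (C * (ρ ^ (γ * r + 1) * (h / √ρ) ^ ((k - 1 : ℕ) * r + 1))) := by
  obtain ⟨W, hW, hweight⟩ := exists_jacobi_le_mul_rpow α β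
  obtain ⟨W', hW', hweight'⟩ := exists_jacobi_le_mul_rpow α' β'
  refine ⟨W ^ r * (3 * k * ((k - 1).factorial * (2 * k ^ k)) ^ r * ((M * W') ^ r / 4 *
    8 ^ ((k - 1 : ℕ) * r + 1))), by positivity, fun f hfm hf hfM h ρ hh hhρ hρ1 => ?_⟩
  have hρ : 0 < ρ := hhρ.trans_lt' (by positivity)
  have hfB : ∀ y ∈ Icc (-1 + ρ / 2) (-1 + 3 * ρ), y ≤ 1 / 2 → |f y| ≤ M * W' * ρ ^ α' :=
    fun y hy hy' => by
      rw [mul_assoc]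
      exact (hfM y ⟨by linarith [hy.1], by linarith⟩).trans
        (mul_le_mul_of_nonneg_left (hweight' ρ y hρ hy hy') hM.le)
  have hw : ∀ x ∈ Icc (-1 + ρ) (min (-1 + 2 * ρ) 0), |jacobi α β x| ≤ W * ρ ^ α := fun x hx => by
    obtain ⟨hx1, hx0⟩ := le_min_iff.1 hx.2
    rw [abs_of_pos (jacobi_pos ⟨by linarith [hx.1], by linarith⟩ α β)]
    exact hweight ρ x hρ ⟨by linarith [hx.1], by linarith⟩ (by linarith)
  have hpow : ρ ^ (γ * r + 1) = (ρ ^ α) ^ r * (ρ ^ α') ^ r * ρ := by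
    rw [Real.rpow_add_one hρ.ne', ← hγ, add_mul, Real.rpow_add hρ, Real.rpow_mul hρ.le,
      Real.rpow_mul hρ.le]
  refine (setLIntegral_enorm_mul_rpow_le measurableSet_Icc (by linarith) (by positivity) hw).trans
    ((mul_le_mul_right (hf.setLIntegral_symmDelta_mul_phiW_le hk hfm hr hh hhρ hρ1 hfB) _).trans_eq
      ?_)
  rw [← ENNReal.ofReal_mul (by positivity), hpow, Real.mul_rpow hW.le (by positivity),
    Real.mul_rpow (by positivity : 0 ≤ M * W') (by positivity),
    Real.mul_rpow (by positivity : (0 : ℝ) ≤ 8) (by positivity)]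
  congr 1
  ring

lemma Icc_subset_iUnion_dyadic {ρ₀ : ℝ} (hρ₀ : 0 < ρ₀) (b : ℝ) :
    Icc (-1 + ρ₀) b ⊆ ⋃ j : ℕ, Icc (-1 + ρ₀ * 2 ^ j) (min (-1 + 2 * (ρ₀ * 2 ^ j)) b) := by
  intro x hx
  have hone : 1 ≤ (1 + x) / ρ₀ := (one_le_div hρ₀).2 (by linarith [hx.1])
  obtain ⟨j, hj, hj'⟩ := exists_nat_pow_near hone (one_lt_two (α := ℝ))
  rw [le_div_iff₀ hρ₀] at hj
  rw [div_lt_iff₀ hρ₀, pow_succ] at hj'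
  exact mem_iUnion.2 ⟨j, by linarith, le_min (by linarith) hx.2⟩

lemma setLIntegral_le_of_dyadic {F : ℝ → ℝ≥0∞} {ρ₀ C κ : ℝ} (hρ₀ : 0 < ρ₀) (hC : 0 ≤ C)
    (hκ : 0 < κ) (hF : ∀ ρ, ρ₀ ≤ ρ → ρ ≤ 1 →
      ∫⁻ x in Icc (-1 + ρ) (min (-1 + 2 * ρ) 0), F x ≤ ENNReal.ofReal (C * (ρ₀ / ρ) ^ κ)) :
    ∫⁻ x in Icc (-1 + ρ₀) 0, F x ≤ ENNReal.ofReal (C * (1 - (1 / 2) ^ κ)⁻¹) := by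
  have ht0 : (0 : ℝ) ≤ (1 / 2) ^ κ := by positivity
  have ht1 : (1 / 2 : ℝ) ^ κ < 1 := Real.rpow_lt_one (by norm_num) (by norm_num) hκ
  have hpiece : ∀ j : ℕ, ∫⁻ x in Icc (-1 + ρ₀ * 2 ^ j) (min (-1 + 2 * (ρ₀ * 2 ^ j)) 0), F x ≤
      ENNReal.ofReal (C * ((1 / 2) ^ κ) ^ j) := fun j => by
    rcases le_or_gt (ρ₀ * 2 ^ j) 1 with hj | hj
    · refine (hF _ (le_mul_of_one_le_right hρ₀.le (one_le_pow₀ one_le_two)) hj).trans_eq ?_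
      rw [div_mul_cancel_left₀ hρ₀.ne', ← inv_pow, ← one_div, Real.rpow_pow_comm (by norm_num)]
    · rw [Icc_eq_empty (not_le.2 ((min_le_right _ _).trans_lt (by linarith))), setLIntegral_empty]
      exact zero_le
  calc ∫⁻ x in Icc (-1 + ρ₀) 0, F x
      ≤ ∑' j : ℕ, ∫⁻ x in Icc (-1 + ρ₀ * 2 ^ j) (min (-1 + 2 * (ρ₀ * 2 ^ j)) 0), F x :=
        (lintegral_mono_set (Icc_subset_iUnion_dyadic hρ₀ 0)).trans (lintegral_iUnion_le _ _)
    _ ≤ ∑' j : ℕ, ENNReal.ofReal (C * ((1 / 2) ^ κ) ^ j) := ENNReal.tsum_le_tsum hpiece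
    _ = ENNReal.ofReal (C * (1 - (1 / 2) ^ κ)⁻¹) := by
        rw [← ENNReal.ofReal_tsum_of_nonneg (fun j => by positivity)
          ((summable_geometric_of_lt_one ht0 ht1).mul_left C), tsum_mul_left,
          tsum_geometric_of_lt_one ht0 ht1]

section LeftHalf

variable {k : ℕ} {M α α' γ r : ℝ}

lemma exists_setLIntegral_near_le (hk : k ≠ 0) (hM : 0 < M) (hγ : α + α' = γ)
    (hr : 0 < r) (hγr : -1 < γ * r) (β β' : ℝ) :
    ∃ C > 0, ∀ f, (∀ y ∈ Ioo (-1 : ℝ) 1, |f y| ≤ M * jacobi α' β' y) →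
      ∀ h : ℝ, 0 < h →
        ∫⁻ x in Icc (-1 + 2 * (k : ℝ) ^ 2 * h ^ 2) (min (-1 + (16 * k * h) ^ 2) 0),
          ‖jacobi α β x * symmDelta k (h * phiW x) f x‖ₑ ^ r ≤
        ENNReal.ofReal (C * (h ^ 2) ^ (γ * r + 1)) := by
  have hγ1 : 0 < γ * r + 1 := by linarith
  set B := 2 ^ k * M * (2 ^ |α'| * 2 ^ |β'|) * 2 ^ |β + β'| with hB
  refine ⟨B ^ r * ((16 * k) ^ 2) ^ (γ * r + 1) / (γ * r + 1), by positivity, fun f hf h hh => ?_⟩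
  have hkh : 0 < 2 * (k : ℝ) ^ 2 * h ^ 2 := by positivity
  refine (setLIntegral_enorm_rpow_le_of_le_rpow (A := (16 * k * h) ^ 2) measurableSet_Icc
    (fun x hx => ⟨by linarith [hx.1], hx.2.trans (min_le_left _ _)⟩) hr hγr (by positivity)
    (by positivity : 0 ≤ B) fun x hx => ?_).trans_eq ?_
  · have hx0 : x ≤ 0 := hx.2.trans (min_le_right _ _)
    have hsq : 2 * (k * h) ^ 2 ≤ 1 + x := by linarith [hx.1]
    have hstep := mul_phiW_le_one_add hsq
    rw [mul_assoc] at hstep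
    have hstep0 : 0 ≤ h * phiW x := mul_nonneg hh.le (Real.sqrt_nonneg _)
    refine (abs_jacobi_mul_symmDelta_le hM.le hf hstep0 ⟨by linarith [hx.1], by linarith⟩ hstep
      (by linarith)).trans ?_
    rw [hγ, hB, mul_assoc _ (2 ^ |β + β'|)]
    gcongr
    exact jacobi_le_mul_one_add_rpow ⟨by linarith [hx.1], by linarith⟩ (by linarith [hx.1])
      (by linarith) γ (β + β')
  · rw [mul_pow (16 * (k : ℝ)),
      Real.mul_rpow (by positivity : 0 ≤ (16 * (k : ℝ)) ^ 2) (sq_nonneg h)]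
    congr 1
    ring

lemma exists_setLIntegral_far_le (hk : k ≠ 0) (hM : 0 < M) (hγ : α + α' = γ)
    (hr : 1 ≤ r) (hexp : 2 * (γ * r + 1) < (k - 1 : ℕ) * r + 1) (β β' : ℝ) :
    ∃ C > 0, ∀ f, Measurable f → kMonotoneOn k f →
      (∀ y ∈ Ioo (-1 : ℝ) 1, |f y| ≤ M * jacobi α' β' y) → ∀ h : ℝ, 0 < h →
        ∫⁻ x in Icc (-1 + (16 * k * h) ^ 2) 0,
          ‖jacobi α β x * symmDelta k (h * phiW x) f x‖ₑ ^ r ≤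
        ENNReal.ofReal (C * (h ^ 2) ^ (γ * r + 1)) := by
  obtain ⟨C, hC, hdyadic⟩ := exists_setLIntegral_dyadic_le hk hM hγ hr β β'
  set θ := γ * r + 1
  set Γ := (k - 1 : ℕ) * r + 1
  set κ := Γ / 2 - θ with hκ
  have hκ0 : 0 < κ := by linarith
  have ht : 0 < 1 - (1 / 2 : ℝ) ^ κ :=
    sub_pos.2 (Real.rpow_lt_one (by norm_num) (by norm_num) hκ0)
  refine ⟨C / (16 * k) ^ Γ * ((16 * k) ^ 2) ^ θ * (1 - (1 / 2) ^ κ)⁻¹, by positivity,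
    fun f hfm hf hfM h hh => ?_⟩
  set ρ₀ := (16 * k * h) ^ 2 with hρ₀
  have hρ₀0 : 0 < ρ₀ := by positivity
  refine (setLIntegral_le_of_dyadic (C := C / (16 * k) ^ Γ * ρ₀ ^ θ) hρ₀0 (by positivity) hκ0
    fun ρ hρ hρ1 => (hdyadic f hfm hf hfM h ρ hh hρ hρ1).trans_eq ?_).trans_eq ?_
  · have hρ0 : 0 < ρ := hρ₀0.trans_le hρ
    have hratio : h / √ρ = √(ρ₀ / ρ) / (16 * k) := by
      rw [Real.sqrt_div hρ₀0.le, hρ₀, Real.sqrt_sq (by positivity)]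
      field_simp
    have hpow : √(ρ₀ / ρ) ^ Γ = (ρ₀ / ρ) ^ κ * (ρ₀ / ρ) ^ θ := by
      rw [← Real.rpow_add (by positivity), hκ, sub_add_cancel, Real.sqrt_eq_rpow,
        ← Real.rpow_mul (by positivity), one_div_mul_eq_div]
    rw [hratio, Real.div_rpow (by positivity) (by positivity), hpow, Real.div_rpow hρ₀0.le hρ0.le θ]
    congr 1
    field_simp
  · rw [hρ₀, mul_pow (16 * (k : ℝ)),
      Real.mul_rpow (by positivity : 0 ≤ (16 * (k : ℝ)) ^ 2) (sq_nonneg h)]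
    congr 1
    ring

lemma exists_setLIntegral_left_le (hk : k ≠ 0) (hM : 0 < M) (hγ : α + α' = γ)
    (hr : 1 ≤ r) (hγr : -1 < γ * r) (hexp : 2 * (γ * r + 1) < (k - 1 : ℕ) * r + 1) (β β' : ℝ) :
    ∃ C > 0, ∀ f, Measurable f → kMonotoneOn k f →
      (∀ y ∈ Ioo (-1 : ℝ) 1, |f y| ≤ M * jacobi α' β' y) → ∀ h : ℝ, 0 < h →
        ∫⁻ x in Icc (-1 + 2 * (k : ℝ) ^ 2 * h ^ 2) 0,
          ‖jacobi α β x * symmDelta k (h * phiW x) f x‖ₑ ^ r ≤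
        ENNReal.ofReal (C * (h ^ 2) ^ (γ * r + 1)) := by
  obtain ⟨C₁, hC₁, hnear⟩ := exists_setLIntegral_near_le hk hM hγ (by linarith) hγr β β'
  obtain ⟨C₂, hC₂, hfar⟩ := exists_setLIntegral_far_le hk hM hγ hr hexp β β'
  refine ⟨C₁ + C₂, by positivity, fun f hfm hf hfM h hh => ?_⟩
  have hcover : Icc (-1 + 2 * (k : ℝ) ^ 2 * h ^ 2) 0 ⊆
      Icc (-1 + 2 * (k : ℝ) ^ 2 * h ^ 2) (min (-1 + (16 * k * h) ^ 2) 0) ∪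
        Icc (-1 + (16 * k * h) ^ 2) 0 := fun x hx =>
    (le_total x (-1 + (16 * k * h) ^ 2)).imp (fun hle => ⟨hx.1, le_min hle hx.2⟩)
      fun hge => ⟨hge, hx.2⟩
  rw [add_mul, ENNReal.ofReal_add (by positivity) (by positivity)]
  exact (lintegral_mono_set hcover).trans ((lintegral_union_le _ _ _).trans
    (add_le_add (hnear f hfM h hh) (hfar f hfm hf hfM h hh)))

end LeftHalf

lemma setLIntegral_Icc_comp_neg (F : ℝ → ℝ≥0∞) (a b : ℝ) :
    ∫⁻ x in Icc (-b) (-a), F (-x) = ∫⁻ x in Icc a b, F x := by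
  have hmp := Measure.measurePreserving_neg (volume : Measure ℝ)
  rw [← hmp.setLIntegral_comp_preimage_emb (MeasurableEquiv.neg ℝ).measurableEmbedding F (Icc a b),
    Set.neg_preimage, Set.neg_Icc]

lemma exists_setLIntegral_main_le {k : ℕ} (hk : k ≠ 0) {M α α' β β' γ r : ℝ} (hM : 0 < M)
    (hα : α + α' = γ) (hβ : β + β' = γ) (hr : 1 ≤ r) (hγr : -1 < γ * r)
    (hexp : 2 * (γ * r + 1) < (k - 1 : ℕ) * r + 1) :
    ∃ C > 0, ∀ f, Measurable f → kMonotoneOn k f →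
      (∀ y ∈ Ioo (-1 : ℝ) 1, |f y| ≤ M * jacobi α' β' y) → ∀ h : ℝ, 0 < h →
        ∫⁻ x in Icc (-1 + 2 * (k : ℝ) ^ 2 * h ^ 2) (1 - 2 * (k : ℝ) ^ 2 * h ^ 2),
          ‖jacobi α β x * symmDelta k (h * phiW x) f x‖ₑ ^ r ≤
        ENNReal.ofReal (C * (h ^ 2) ^ (γ * r + 1)) := by
  obtain ⟨C₁, hC₁, hleft⟩ := exists_setLIntegral_left_le hk hM hα hr hγr hexp β β'
  obtain ⟨C₂, hC₂, hright⟩ := exists_setLIntegral_left_le hk hM hβ hr hγr hexp α α'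
  refine ⟨C₁ + C₂, by positivity, fun f hfm hf hfM h hh => ?_⟩
  have hcover : Icc (-1 + 2 * (k : ℝ) ^ 2 * h ^ 2) (1 - 2 * (k : ℝ) ^ 2 * h ^ 2) ⊆
      Icc (-1 + 2 * (k : ℝ) ^ 2 * h ^ 2) 0 ∪ Icc 0 (1 - 2 * (k : ℝ) ^ 2 * h ^ 2) := fun x hx =>
    (le_total x 0).imp (fun hle => ⟨hx.1, hle⟩) fun hge => ⟨hge, hx.2⟩
  have hreflect := hright _ (measurable_signedReflect k hfm) hf.signedReflect
    (abs_signedReflect_le_mul_jacobi hfM) h hh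
  rw [add_mul, ENNReal.ofReal_add (by positivity) (by positivity)]
  refine (lintegral_mono_set hcover).trans ((lintegral_union_le _ _ _).trans
    (add_le_add (hleft f hfm hf hfM h hh) ?_))
  rw [← setLIntegral_Icc_comp_neg, neg_sub, sub_eq_neg_add, neg_zero]
  simpa only [jacobi_neg, phiW_neg, symmDelta_neg] using hreflect

lemma exists_OmegaMain_le {k : ℕ} (hk : k ≠ 0) {q : ℝ≥0∞} (hq1 : 1 ≤ q) (hq : q ≠ ∞)
    {M α α' β β' γ : ℝ} (hM : 0 < M) (hα : α + α' = γ) (hβ : β + β' = γ)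
    (hγq : -1 < γ * q.toReal) (hexp : 2 * (γ * q.toReal + 1) < (k - 1 : ℕ) * q.toReal + 1) :
    ∃ C > 0, ∀ f, Measurable f → kMonotoneOn k f →
      (∀ y ∈ Ioo (-1 : ℝ) 1, |f y| ≤ M * jacobi α' β' y) → ∀ δ : ℝ,
        OmegaMain k f δ (jacobi α β) q ≤ ENNReal.ofReal (C * δ ^ (2 * (γ + 1 / q.toReal))) := by
  have hr : 1 ≤ q.toReal := ENNReal.toReal_mono hq hq1
  have hr0 : 0 < q.toReal := by linarith
  obtain ⟨C, hC, hint⟩ := exists_setLIntegral_main_le hk hM hα hβ hr hγq hexp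
  refine ⟨C ^ (1 / q.toReal), by positivity, fun f hfm hf hfM δ => iSup₂_le fun h hh => ?_⟩
  have hh0 : 0 < h := hh.1
  have hpow : ((h ^ 2) ^ (γ * q.toReal + 1)) ^ (1 / q.toReal) = h ^ (2 * (γ + 1 / q.toReal)) := by
    rw [← Real.rpow_natCast, ← Real.rpow_mul hh0.le, ← Real.rpow_mul hh0.le]
    congr 1
    push_cast
    field_simp
  have hexp0 : 0 ≤ γ + 1 / q.toReal := by
    rw [← mul_div_cancel_right₀ γ hr0.ne', ← add_div]
    exact div_nonneg (by linarith) hr0.le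
  refine (LpOn_le_of_setLIntegral_le (one_pos.trans_le hq1).ne' hq (by positivity)
    (hint f hfm hf hfM h hh0)).trans (ENNReal.ofReal_le_ofReal ?_)
  rw [Real.mul_rpow hC.le (by positivity), hpow]
  gcongr
  exact hh.2

/-! ### The upper estimate -/

lemma neg_sub_one_div_toReal_nonpos_of_mem_Jset {p : ℝ≥0∞} {α : ℝ} (hα : α ∈ Jset p) :
    -α - 1 / p.toReal ≤ 0 := by
  unfold Jset at hα
  split_ifs at hα with hp
  · rw [hp, ENNReal.toReal_top, div_zero, sub_zero]
    exact neg_nonpos.2 hα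
  · have hα : -1 / p.toReal < α := hα
    rw [neg_div] at hα
    linarith

lemma neg_one_div_toReal_mem_Jset {p q : ℝ≥0∞} (hq : q ≠ 0) (hqp : q < p) :
    -(1 / p.toReal) ∈ Jset q := by
  have hq0 : 0 < q.toReal := ENNReal.toReal_pos hq hqp.ne_top
  rw [Jset, if_neg hqp.ne_top, mem_Ioi, neg_div, neg_lt_neg_iff]
  by_cases hp : p = ∞
  · rw [hp, ENNReal.toReal_top, div_zero]
    positivity
  · exact one_div_lt_one_div_of_lt hq0 ((ENNReal.toReal_lt_toReal hqp.ne_top hp).2 hqp)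

lemma two_mul_neg_one_div_mul_add_one_lt {k : ℕ} (hk : 2 ≤ k) {p q : ℝ≥0∞} (hp : p ≠ 0)
    (hq1 : 1 ≤ q) (hq : q ≠ ∞) (hne : ¬(k = 2 ∧ q = 1 ∧ p = ∞)) :
    2 * (-(1 / p.toReal) * q.toReal + 1) < (k - 1 : ℕ) * q.toReal + 1 := by
  have hr : 1 ≤ q.toReal := ENNReal.toReal_mono hq hq1
  have hratio : 0 ≤ 1 / p.toReal * q.toReal := by positivity
  have hn : (1 : ℝ) ≤ (k - 1 : ℕ) := by exact_mod_cast (by omega : 1 ≤ k - 1)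
  have hprod : q.toReal ≤ (k - 1 : ℕ) * q.toReal := le_mul_of_one_le_left (by linarith) hn
  rcases hr.eq_or_lt with hr1 | hr1
  · by_cases hp' : p = ∞
    · have hq_one : q = 1 := by rw [← ENNReal.ofReal_toReal hq, ← hr1, ENNReal.ofReal_one]
      have hk2 : k ≠ 2 := fun h => hne ⟨h, hq_one, hp'⟩
      have hn2 : (2 : ℝ) ≤ (k - 1 : ℕ) := by exact_mod_cast (by omega : 2 ≤ k - 1)
      rw [← hr1] at hratio ⊢
      linarith
    · have hp0 := ENNReal.toReal_pos hp hp'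
      have hpos : 0 < 1 / p.toReal * q.toReal := by positivity
      linarith
  · linarith

lemma exists_iSup_omegaDT_le {k : ℕ} (hk : k ≠ 0) {q p : ℝ≥0∞} (hq : 1 ≤ q) (hqp : q < p)
    (hexp : 2 * (-(1 / p.toReal) * q.toReal + 1) < (k - 1 : ℕ) * q.toReal + 1)
    {α β : ℝ} (hα : α ∈ Jset p) (hβ : β ∈ Jset p) {δ₀ : ℝ}
    (hkδ₀ : (k : ℝ) ^ 2 * (k + 1) * δ₀ ^ 2 < 1) :
    ∃ c > 0, ∀ δ, 0 < δ → δ ≤ δ₀ →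
      (⨆ f ∈ BSet p α β ∩ MSet k, omegaDT k f δ (jacobi α β) q) ≤
        ENNReal.ofReal (c * δ ^ (2 / q.toReal - 2 / p.toReal)) := by
  have hq0 : q ≠ 0 := (one_pos.trans_le hq).ne'
  have hγ := neg_one_div_toReal_mem_Jset hq0 hqp
  have hsum (a : ℝ) : a + (-a - 1 / p.toReal) = -(1 / p.toReal) := by ring
  obtain ⟨M, hM, hgrowth⟩ := exists_abs_le_mul_jacobi hk hqp.ne_bot α β
  obtain ⟨C₁, hC₁, hmain⟩ := exists_OmegaMain_le hk hq hqp.ne_top hM (hsum α) (hsum β)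
    (neg_one_lt_mul_toReal_of_mem_Jset hq0 hqp.ne_top hγ) hexp
  obtain ⟨C₂, hC₂, hfwd⟩ := exists_OmegaFwd_le hk hq0 hM
    (neg_sub_one_div_toReal_nonpos_of_mem_Jset hα) (hsum α) hγ β (-β - 1 / p.toReal) hkδ₀
  obtain ⟨C₃, hC₃, hbwd⟩ := exists_OmegaFwd_le hk hq0 hM
    (neg_sub_one_div_toReal_nonpos_of_mem_Jset hβ) (hsum β) hγ α (-α - 1 / p.toReal) hkδ₀
  refine ⟨C₁ + C₂ + C₃, by positivity, fun δ hδ hδδ₀ => iSup₂_le fun f hf => ?_⟩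
  have hfM := hgrowth f hf
  rw [show 2 / q.toReal - 2 / p.toReal = 2 * (-(1 / p.toReal) + 1 / q.toReal) by ring, add_mul,
    add_mul, ENNReal.ofReal_add (by positivity) (by positivity),
    ENNReal.ofReal_add (by positivity) (by positivity), omegaDT,
    OmegaBwd_eq_OmegaFwd_signedReflect]
  exact add_le_add (add_le_add (hmain f hf.1.1 hf.2 hfM δ) (hfwd f hfM δ hδ hδδ₀))
    (hbwd _ (abs_signedReflect_le_mul_jacobi hfM) δ hδ hδδ₀)

theorem statement0 (k : ℕ) (hk : 2 ≤ k) (q p : ℝ≥0∞) (hq : 1 ≤ q) (hqp : q < p)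
    (hne : ¬(k = 2 ∧ q = 1 ∧ p = ∞)) (α β : ℝ) (hα : α ∈ Jset p) (hβ : β ∈ Jset p)
    (δ₀ : ℝ) (hδ₀ : 0 < δ₀) (hkδ₀ : (k : ℝ) ^ 2 * ((k : ℝ) + 1) * δ₀ ^ 2 < 1) :
    ∃ c₁ > (0 : ℝ), ∃ c₂ > (0 : ℝ), ∀ δ : ℝ, 0 < δ → δ ≤ δ₀ →
      ENNReal.ofReal (c₁ * δ ^ (2 / q.toReal - 2 / p.toReal)) ≤
        (⨆ f ∈ BSet p α β ∩ MSet k, omegaDT k f δ (jacobi α β) q) ∧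
      (⨆ f ∈ BSet p α β ∩ MSet k, omegaDT k f δ (jacobi α β) q) ≤
        ENNReal.ofReal (c₂ * δ ^ (2 / q.toReal - 2 / p.toReal)) := by
  have hexp := two_mul_neg_one_div_mul_add_one_lt hk hqp.ne_bot hq hqp.ne_top hne
  obtain ⟨c₁, hc₁, hlower⟩ := exists_le_iSup_omegaDT (by omega) (one_pos.trans_le hq).ne'
    hqp.ne_bot α hβ hkδ₀.le
  obtain ⟨c₂, hc₂, hupper⟩ := exists_iSup_omegaDT_le (by omega) hq hqp hexp hα hβ hkδ₀
  exact ⟨c₁, hc₁, c₂, hc₂, fun δ hδ hδδ₀ => ⟨hlower δ hδ hδδ₀, hupper δ hδ hδδ₀⟩⟩
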